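/- arXiv:1010.1113 — 3 statements merged into one kernel-verified Lean document; each statement's English description precedes it below -/
import Mathlib

section
/- Let G be a 2-connected bipartite graph containing no even subdivision of K_{2,3}. Then G has a bipartite ear decomposition starting with any cycle of G: for any cycle C of G there is a sequence C = G_1 ⊆ G_2 ⊆ ... ⊆ G_m = G where each G_{i+1} is obtained from G_i by adding a path of odd length internally disjoint from G_i with both endpoints in G_i. -/
/-- `G.HasSubdivision H plen` means `G` contains a subdivision of `H` in which the path
replacing each edge of `H` has length satisfying `plen`: there is an injection `f` of the
vertices of `H` (branch vertices) into `G`, and for each edge of `H` a path in `G` between the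
corresponding branch vertices, such that no branch vertex is an internal vertex of any such
path and paths corresponding to distinct edges meet only in branch vertices. -/
def SimpleGraph.HasSubdivision {V W : Type*} (G : SimpleGraph V) (H : SimpleGraph W)
    (plen : ℕ → Prop) : Prop :=
  ∃ f : W → V, Function.Injective f ∧
    ∃ p : ∀ a b, H.Adj a b → G.Walk (f a) (f b),
      (∀ a b (h : H.Adj a b), (p a b h).IsPath) ∧
      (∀ a b (h : H.Adj a b), plen (p a b h).length) ∧
      (∀ a b (h : H.Adj a b) (w : W), f w ∈ (p a b h).support → w = a ∨ w = b) ∧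
      (∀ a b a' b' (h : H.Adj a b) (h' : H.Adj a' b'), s(a, b) ≠ s(a', b') →
        ∀ x, x ∈ (p a b h).support → x ∈ (p a' b' h').support →
          (x = f a ∨ x = f b) ∧ (x = f a' ∨ x = f b'))

/-- `G` contains a subdivision of `H`. -/
def SimpleGraph.ContainsSubdivision {V W : Type*} (G : SimpleGraph V) (H : SimpleGraph W) :
    Prop :=
  G.HasSubdivision H fun _ => True

/-- `G` contains an even subdivision of `H`, i.e. a subdivision in which every edge of `H`
is subdivided an even number of times (so the replacing paths have odd length). -/
def SimpleGraph.ContainsEvenSubdivision {V W : Type*} (G : SimpleGraph V) (H : SimpleGraph W) :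
    Prop :=
  G.HasSubdivision H fun n => Odd n

/-- Planarity, via Kuratowski's characterization: no subdivision of `K₅` or `K₃,₃`. -/
def SimpleGraph.KuratowskiPlanar {V : Type*} (G : SimpleGraph V) : Prop :=
  ¬ G.ContainsSubdivision (completeGraph (Fin 5)) ∧
    ¬ G.ContainsSubdivision (completeBipartiteGraph (Fin 3) (Fin 3))

/-- A graph is 2-connected if it has at least 3 vertices and deleting any single vertex
leaves a connected graph. -/
def SimpleGraph.TwoConnected {V : Type*} (G : SimpleGraph V) : Prop :=
  3 ≤ Nat.card V ∧ ∀ v : V, ((⊤ : G.Subgraph).deleteVerts {v}).coe.Connected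

/-- `p` is an ear of the subgraph `H`: a path of odd length with both endpoints in `H`
and no internal vertex in `H`. -/
def SimpleGraph.Subgraph.IsEar {V : Type*} {G : SimpleGraph V} (H : G.Subgraph)
    {x y : V} (p : G.Walk x y) : Prop :=
  p.IsPath ∧ Odd p.length ∧ x ∈ H.verts ∧ y ∈ H.verts ∧
    ∀ w ∈ p.support, w ∈ H.verts → w = x ∨ w = y

/-!
A proper subgraph `H` of `G` whose vertex set cannot be separated by one vertex always has an ear.
If `H` is spanning, any missing edge is one. Otherwise, as `G` is 2-connected, some path leaves `H`
and returns to it at a different vertex. By Whitney's theorem its endpoints `x`, `y` are joined by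
two internally disjoint paths inside `H`, and as `G` is bipartite all three paths have the same
parity. Were they even, they would form an even subdivision of `K_{2,3}`: its branch vertices are
`x` and `y` on one side and the first vertex after `x` on each path on the other. So the ear is
odd. Adding an ear creates no cut vertex, so starting from a cycle the process only stops at `G`.
-/

namespace EarDecomposition

open SimpleGraph

variable {V : Type*} {G : SimpleGraph V} {S T : Set V} {a u v w x y z : V}

section Walks

lemma exists_walk_of_preconnected_induce (h : (G.induce S).Preconnected) (hu : u ∈ S)
    (hv : v ∈ S) : ∃ p : G.Walk u v, ∀ z ∈ p.support, z ∈ S := by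
  obtain ⟨p⟩ := h ⟨u, hu⟩ ⟨v, hv⟩
  refine ⟨p.map (Embedding.induce S).toHom, fun z hz => ?_⟩
  have hz := Walk.support_map (Embedding.induce S).toHom p ▸ hz
  obtain ⟨t, -, rfl⟩ := List.mem_map.1 hz
  exact t.2

lemma exists_isPath_forall_mem_support_imp_eq (p : G.Walk u v) (hv : v ∈ S) :
    ∃ y ∈ S, ∃ q : G.Walk u y, q.IsPath ∧ (∀ z ∈ q.support, z ∈ p.support) ∧
      ∀ z ∈ q.support, z ∈ S → z = y := by
  classical
  obtain ⟨y, hyS, hy, hfirst⟩ := p.bypass.exists_mem_support_forall_mem_support_imp_eq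
    {z ∈ p.support.toFinset | z ∈ S} ⟨v, by simp [hv]⟩
  have hsub : ∀ z ∈ (p.bypass.takeUntil y hy).support, z ∈ p.support := fun z hz =>
    p.support_bypass_subset_support (Walk.support_takeUntil_subset_support _ hy hz)
  refine ⟨y, (Finset.mem_filter.1 hyS).2, _, p.bypass_isPath.takeUntil hy, hsub, ?_⟩
  exact fun z hz hzS => hfirst z (by simpa [hzS] using hsub z hz) hz

lemma isPath_append {p : G.Walk u v} {q : G.Walk v w} (hp : p.IsPath) (hq : q.IsPath)
    (h : ∀ z ∈ p.support, z ∈ q.support → z = v) : (p.append q).IsPath := by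
  have hv : v ∉ q.support.tail := by
    have := hq.support_nodup
    rw [← q.cons_tail_support] at this
    exact (List.nodup_cons.1 this).1
  rw [Walk.isPath_def, Walk.support_append, List.nodup_append']
  refine ⟨hp.support_nodup, hq.support_nodup.tail, fun z hzp hzq => ?_⟩
  exact hv (h z hzp (List.mem_of_mem_tail hzq) ▸ hzq)

lemma notMem_support_tail_of_isPath {p : G.Walk u v} (hp : p.IsPath) (hnil : ¬ p.Nil) :
    u ∉ p.tail.support := by
  have := hp.support_nodup
  rw [← Walk.cons_support_tail hnil] at this
  exact (List.nodup_cons.1 this).1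

lemma ne_of_mem_support_of_isPath {p : G.Walk u v} (hp : p.IsPath) (hz : z ∈ p.support)
    (hzv : z ≠ v) : u ≠ v := by
  rintro rfl
  rw [Walk.nil_iff_support_eq.1 (Walk.isPath_iff_nil.1 hp)] at hz
  exact hzv (List.mem_singleton.1 hz)

lemma ne_of_isPath_of_odd_length {p : G.Walk u v} (hp : p.IsPath) (hodd : Odd p.length) :
    u ≠ v := by
  rintro rfl
  simp [Walk.length_eq_zero_iff.2 (Walk.isPath_iff_nil.1 hp)] at hodd

lemma even_length_iff_of_colorable_two (hG : G.Colorable 2) (p q : G.Walk u v) :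
    Even p.length ↔ Even q.length := by
  simpa [Nat.even_add] using two_colorable_iff_forall_loop_even.1 hG u (p.append q.reverse)

end Walks

section Nonseparable

/-- No vertex separates `S`: the graph induced on `S` stays preconnected when any one vertex is
deleted. The vertex may lie outside `S`, so unless `S` is everything, `S` itself is preconnected. -/
def IsNonseparable (G : SimpleGraph V) (S : Set V) : Prop :=
  ∀ a, (G.induce (S \ {a})).Preconnected

lemma IsNonseparable.preconnected (hS : IsNonseparable G S) (ha : a ∉ S) :
    (G.induce S).Preconnected :=
  Set.sdiff_singleton_eq_self ha ▸ hS a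

lemma isNonseparable_univ_of_twoConnected (hG : G.TwoConnected) :
    IsNonseparable G Set.univ := fun a => by
  rw [induce_eq_coe_induce_top]
  exact (hG.2 a).preconnected

lemma preconnected_induce_union (hS : (G.induce S).Preconnected) (hT : (G.induce T).Preconnected)
    (h : T.Nonempty → (S ∩ T).Nonempty) : (G.induce (S ∪ T)).Preconnected := by
  rcases T.eq_empty_or_nonempty with rfl | hT'
  · rwa [Set.union_empty]
  · exact (induce_union_connected hS hT (h hT')).preconnected

lemma preconnected_induce_support_sdiff_end {p : G.Walk u v} (hp : p.IsPath) :
    (G.induce ({z | z ∈ p.support} \ {v})).Preconnected := by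
  by_cases hnil : p.Nil
  · exact fun ⟨z, hz, hzv⟩ => absurd hnil.eq (ne_of_mem_support_of_isPath hp hz hzv)
  · have hnodup := hp.support_nodup
    rw [← Walk.support_dropLast_concat hnil, List.nodup_append'] at hnodup
    have : {z | z ∈ p.support} \ {v} = {z | z ∈ p.dropLast.support} := by
      ext z
      rw [← Walk.support_dropLast_concat hnil]
      have := hnodup.2.2
      grind [List.Disjoint]
    exact this ▸ p.dropLast.connected_induce_support.preconnected

lemma isNonseparable_support_of_isCycle {c : G.Walk v v} (hc : c.IsCycle) :
    IsNonseparable G {z | z ∈ c.support} := by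
  classical
  intro a
  by_cases ha : a ∈ c.support
  · have hd := hc.rotate ha
    have hsupport : {z | z ∈ c.support} = {z | z ∈ (c.rotate a ha).tail.support} := by
      ext z
      rw [Set.mem_ofPred, ← Walk.mem_support_rotate_iff c a ha, ← Walk.cons_support_tail hd.not_nil]
      have := (c.rotate a ha).tail.end_mem_support
      grind
    exact hsupport ▸ preconnected_induce_support_sdiff_end hd.isPath_tail
  · rw [Set.sdiff_singleton_eq_self (s := {z | z ∈ c.support}) ha]
    exact c.connected_induce_support.preconnected

lemma IsNonseparable.union_support (hS : IsNonseparable G S) (hx : x ∈ S) (hy : y ∈ S)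
    {p : G.Walk x y} (hp : p.IsPath) : IsNonseparable G (S ∪ {z | z ∈ p.support}) := by
  intro a
  by_cases ha : a ∈ p.support
  · obtain ⟨q, r, hq, hr, rfl⟩ := hp.mem_support_iff_exists_append.1 ha
    have hsplit : (S ∪ {z | z ∈ (q.append r).support}) \ {a} =
        (S \ {a} ∪ {z | z ∈ q.support} \ {a}) ∪ {z | z ∈ r.reverse.support} \ {a} := by
      ext z
      simp only [Walk.mem_support_append_iff, Walk.support_reverse, List.mem_reverse]
      grind
    rw [hsplit]
    refine preconnected_induce_union (preconnected_induce_union (hS a)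
      (preconnected_induce_support_sdiff_end hq) fun ⟨z, hz, hza⟩ => ?_)
      (preconnected_induce_support_sdiff_end hr.reverse) fun ⟨z, hz, hza⟩ => ?_
    · have hxa := ne_of_mem_support_of_isPath hq hz hza
      exact ⟨x, ⟨hx, hxa⟩, q.start_mem_support, hxa⟩
    · have hya := ne_of_mem_support_of_isPath hr.reverse hz hza
      exact ⟨y, .inl ⟨hy, hya⟩, r.reverse.start_mem_support, hya⟩
  · have hsplit : (S ∪ {z | z ∈ p.support}) \ {a} = S \ {a} ∪ {z | z ∈ p.support} := by
      rw [Set.union_sdiff_distrib, Set.sdiff_singleton_eq_self (s := {z | z ∈ p.support}) ha]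
    rw [hsplit]
    refine preconnected_induce_union (hS a) p.connected_induce_support.preconnected fun _ => ?_
    exact ⟨x, ⟨hx, by rintro rfl; exact ha p.start_mem_support⟩, p.start_mem_support⟩

end Nonseparable

section Whitney

/-- The walks `P` and `Q` share no vertices besides their common endpoints. -/
def InternallyDisjoint (P Q : G.Walk x y) : Prop :=
  ∀ z ∈ P.support, z ∈ Q.support → z = x ∨ z = y

lemma InternallyDisjoint.symm {P Q : G.Walk x y} (h : InternallyDisjoint P Q) :
    InternallyDisjoint Q P :=
  fun z hQ hP => h z hP hQ

/-- `P` and `Q` are internally disjoint paths inside `S`; together they form a cycle through their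
endpoints, which may degenerate to a single edge or vertex. -/
structure IsDisjointPathPair (S : Set V) (P Q : G.Walk x y) : Prop where
  isPath_left : P.IsPath
  isPath_right : Q.IsPath
  mem_of_left : ∀ z ∈ P.support, z ∈ S
  mem_of_right : ∀ z ∈ Q.support, z ∈ S
  internallyDisjoint : InternallyDisjoint P Q

lemma IsDisjointPathPair.symm {P Q : G.Walk x y} (h : IsDisjointPathPair S P Q) :
    IsDisjointPathPair S Q P :=
  ⟨h.isPath_right, h.isPath_left, h.mem_of_right, h.mem_of_left, h.internallyDisjoint.symm⟩

/- `P` is left at `w` along `r`, while `Q` is prolonged by the edge `zy`. -/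
lemma IsDisjointPathPair.reroute {P Q : G.Walk x z} (h : IsDisjointPathPair S P Q)
    (hzy : G.Adj z y) (hyx : y ≠ x) {r : G.Walk y w} (hr : r.IsPath) (hw : w ∈ P.support)
    (hwz : w ≠ z) (hrS : ∀ s ∈ r.support, s ∈ S)
    (hrPQ : ∀ s ∈ r.support, s ∈ P.support ∨ s ∈ Q.support → s = w) :
    ∃ P' Q' : G.Walk x y, IsDisjointPathPair S P' Q' := by
  classical
  have hyQ : y ∉ Q.support := fun hyQ => by
    obtain rfl := hrPQ y r.start_mem_support (.inr hyQ)
    exact (h.internallyDisjoint y hw hyQ).elim hyx hwz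
  have htake : ∀ s ∈ (P.takeUntil w hw).support, s ∈ P.support :=
    fun s hs => P.support_takeUntil_subset_support hw hs
  refine ⟨(P.takeUntil w hw).append r.reverse, Q.concat hzy,
    isPath_append (h.isPath_left.takeUntil hw) hr.reverse fun s hs hsr => ?_,
    h.isPath_right.concat hyQ hzy, fun s hs => ?_, fun s hs => ?_, fun s hs hs' => ?_⟩
  · exact hrPQ s (by simpa using hsr) (.inl (htake s hs))
  · rcases (Walk.mem_support_append_iff _ _).1 hs with hs | hs
    · exact h.mem_of_left s (htake s hs)
    · exact hrS s (by simpa using hs)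
  · rw [Walk.support_concat, List.mem_append, List.mem_singleton] at hs
    rcases hs with hs | rfl
    · exact h.mem_of_right s hs
    · exact hrS s r.start_mem_support
  · rw [Walk.support_concat, List.mem_append, List.mem_singleton] at hs'
    refine hs'.imp_left fun hsQ => ?_
    have hsP : s ∈ (P.takeUntil w hw).support := by
      rcases (Walk.mem_support_append_iff _ _).1 hs with hs | hs
      · exact hs
      · obtain rfl := hrPQ s (by simpa using hs) (.inr hsQ)
        exact Walk.end_mem_support _
    refine (h.internallyDisjoint s (htake s hsP) hsQ).resolve_right ?_
    rintro rfl
    exact Walk.endpoint_notMem_support_takeUntil h.isPath_left hw hwz.symm hsP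

lemma IsDisjointPathPair.exists_of_adj {P Q : G.Walk x z} (h : IsDisjointPathPair S P Q)
    (hzy : G.Adj z y) (hyx : y ≠ x) {R : G.Walk y x} (hR : ∀ s ∈ R.support, s ∈ S \ {z}) :
    ∃ P' Q' : G.Walk x y, IsDisjointPathPair S P' Q' := by
  obtain ⟨w, hw, r, hr, hrR, hrw⟩ :=
    exists_isPath_forall_mem_support_imp_eq (S := {s | s ∈ P.support ∨ s ∈ Q.support}) R
      (.inl P.start_mem_support)
  have hrS : ∀ s ∈ r.support, s ∈ S := fun s hs => (hR s (hrR s hs)).1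
  have hwz : w ≠ z := (hR w (hrR w r.end_mem_support)).2
  rcases hw with hw | hw
  · exact h.reroute hzy hyx hr hw hwz hrS hrw
  · exact h.symm.reroute hzy hyx hr hw hwz hrS fun s hs hs' => hrw s hs hs'.symm

theorem IsNonseparable.exists_isDisjointPathPair (hS : IsNonseparable G S)
    (hconn : (G.induce S).Preconnected) (hx : x ∈ S) (hy : y ∈ S) :
    ∃ P Q : G.Walk x y, IsDisjointPathPair S P Q := by
  obtain ⟨W, hW⟩ := exists_walk_of_preconnected_induce hconn hy hx
  clear hconn hy
  induction W with
  | nil => exact ⟨.nil, .nil, .nil, .nil, hW, hW, fun s hs _ => .inl (by simpa using hs)⟩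
  | @cons y z x hyz W ih =>
    have hyS : y ∈ S := hW y (by simp)
    obtain ⟨P, Q, hPQ⟩ := ih hx fun s hs => hW s (List.mem_cons_of_mem _ hs)
    by_cases hyx : y = x
    · subst hyx
      refine ⟨.nil, .nil, .nil, .nil, ?_, ?_, fun s hs _ => ?_⟩ <;> simp_all
    by_cases hzx : z = x
    · subst hzx
      refine ⟨hyz.symm.toWalk, hyz.symm.toWalk, .of_adj _, .of_adj _, ?_, ?_, fun s hs _ => ?_⟩ <;>
        simp_all
    obtain ⟨R, hR⟩ := exists_walk_of_preconnected_induce (hS z) ⟨hyS, hyz.ne⟩ ⟨hx, Ne.symm hzx⟩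
    exact hPQ.exists_of_adj hyz.symm hyx hR

end Whitney

section Subdivision

lemma hasSubdivision_completeBipartiteGraph {α β : Type*} {plen : ℕ → Prop} (f : α → V) (g : β → V)
    (hfg : Function.Injective (Sum.elim f g)) (p : ∀ i j, G.Walk (f i) (g j))
    (hp : ∀ i j, (p i j).IsPath) (hlen : ∀ i j, plen (p i j).length)
    (hbranch : ∀ i j w, Sum.elim f g w ∈ (p i j).support → w = .inl i ∨ w = .inr j)
    (hdisj : ∀ i j i' j', (i, j) ≠ (i', j') → ∀ z ∈ (p i j).support, z ∈ (p i' j').support →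
      z = f i ∨ z = g j) :
    G.HasSubdivision (completeBipartiteGraph α β) plen := by
  let q : ∀ a b, (completeBipartiteGraph α β).Adj a b →
      G.Walk (Sum.elim f g a) (Sum.elim f g b) := fun a b h => match a, b, h with
    | .inl i, .inr j, _ => p i j
    | .inr j, .inl i, _ => (p i j).reverse
    | .inl _, .inl _, h => absurd h (by simp)
    | .inr _, .inr _, h => absurd h (by simp)
  have hq : ∀ a b h, ∃ i j, s(a, b) = s(.inl i, .inr j) ∧ (q a b h).IsPath ∧
      plen (q a b h).length ∧ ∀ z, z ∈ (q a b h).support ↔ z ∈ (p i j).support := by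
    rintro (i | j) (i' | j') h
    · simp at h
    · exact ⟨i, j', rfl, hp _ _, hlen _ _, fun _ => .rfl⟩
    · exact ⟨i', j, Sym2.eq_swap, (hp _ _).reverse, (p i' j).length_reverse.symm ▸ hlen _ _,
        fun z => by simp [q]⟩
    · simp at h
  refine ⟨Sum.elim f g, hfg, q, fun a b h => ?_, fun a b h => ?_, fun a b h w hw => ?_,
    fun a b a' b' h h' hne z hz hz' => ?_⟩
  · obtain ⟨i, j, -, hpath, -⟩ := hq a b h
    exact hpath
  · obtain ⟨i, j, -, -, hplen, -⟩ := hq a b h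
    exact hplen
  · obtain ⟨i, j, hab, -, -, hsupp⟩ := hq a b h
    have := hbranch i j w ((hsupp _).1 hw)
    rcases Sym2.eq_iff.1 hab with ⟨rfl, rfl⟩ | ⟨rfl, rfl⟩
    exacts [this, this.symm]
  · obtain ⟨i, j, hab, -, -, hsupp⟩ := hq a b h
    obtain ⟨i', j', hab', -, -, hsupp'⟩ := hq a' b' h'
    have hij : (i, j) ≠ (i', j') := by
      rintro ⟨⟩
      exact hne (hab.trans hab'.symm)
    have hend := hdisj i j i' j' hij z ((hsupp z).1 hz) ((hsupp' z).1 hz')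
    have hend' := hdisj i' j' i j hij.symm z ((hsupp' z).1 hz') ((hsupp z).1 hz)
    constructor
    · rcases Sym2.eq_iff.1 hab with ⟨rfl, rfl⟩ | ⟨rfl, rfl⟩
      exacts [hend, hend.symm]
    · rcases Sym2.eq_iff.1 hab' with ⟨rfl, rfl⟩ | ⟨rfl, rfl⟩
      exacts [hend', hend'.symm]

lemma containsEvenSubdivision_of_adj_of_odd {ι : Type*} (hxy : x ≠ y) {s : ι → V}
    (hs : ∀ i, G.Adj x (s i)) (q : ∀ i, G.Walk (s i) y) (hq : ∀ i, (q i).IsPath)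
    (hodd : ∀ i, Odd (q i).length) (hx : ∀ i, x ∉ (q i).support)
    (hdisj : ∀ i j, i ≠ j → ∀ z ∈ (q i).support, z ∈ (q j).support → z = y) :
    G.ContainsEvenSubdivision (completeBipartiteGraph (Fin 2) ι) := by
  have hsy : ∀ i, s i ≠ y := fun i => ne_of_isPath_of_odd_length (hq i) (hodd i)
  have hsq : ∀ i j, s i ∈ (q j).support → i = j := fun i j h =>
    by_contra fun hij => hsy i (hdisj i j hij _ (q i).start_mem_support h)
  have hinj : Function.Injective (Sum.elim ![x, y] s) := by
    refine Function.Injective.sumElim ?_ (fun i j h => hsq i j (by simp [h])) ?_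
    · simp [Function.Injective, Fin.forall_fin_two, hxy, hxy.symm]
    · simp [Fin.forall_fin_two, (hs _).ne, (hsy _).symm]
  have hbranch : ∀ j w, Sum.elim ![x, y] s w ∈ (q j).support → w = .inl 1 ∨ w = .inr j := by
    rintro j (i | i) h
    · revert i
      simp [Fin.forall_fin_two, hx]
    · exact .inr (congrArg _ (hsq i j h))
  refine hasSubdivision_completeBipartiteGraph ![x, y] s hinj
    (fun i j => match i with
      | 0 => (hs j).toWalk
      | 1 => (q j).reverse) ?_ ?_ ?_ ?_
  · simp [Fin.forall_fin_two, hq, (hs _).ne]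
  · simp [Fin.forall_fin_two, hodd]
  · refine Fin.forall_fin_two.2 ⟨fun j w hw => ?_, fun j w hw => ?_⟩
    · have : Sum.elim ![x, y] s w = Sum.elim ![x, y] s (.inl 0) ∨
          Sum.elim ![x, y] s w = Sum.elim ![x, y] s (.inr j) := by simpa using hw
      exact this.imp (@hinj _ _) (@hinj _ _)
    · exact hbranch j w (by simpa using hw)
  · simp only [Fin.forall_fin_two]
    refine ⟨fun j => ⟨fun j' _ z hz _ => ?_, fun j' _ z hz _ => ?_⟩,
      fun j => ⟨fun j' _ z hz hz' => ?_, fun j' hne z hz hz' => ?_⟩⟩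
    · simpa using hz
    · simpa using hz
    · have hzq : z ∈ (q j).support := by simpa using hz
      obtain rfl | rfl : z = x ∨ z = s j' := by simpa using hz'
      · exact absurd hzq (hx j)
      · exact .inr (congrArg s (hsq j' j hzq))
    · exact .inl (hdisj j j' (by simpa using hne) z (by simpa using hz) (by simpa using hz'))

theorem containsEvenSubdivision_of_pairwise_internallyDisjoint {ι : Type*} (hxy : x ≠ y)
    (P : ι → G.Walk x y) (hP : ∀ i, (P i).IsPath) (heven : ∀ i, Even (P i).length)
    (hdisj : Pairwise fun i j => InternallyDisjoint (P i) (P j)) :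
    G.ContainsEvenSubdivision (completeBipartiteGraph (Fin 2) ι) := by
  have hnil : ∀ i, ¬ (P i).Nil := fun i => Walk.not_nil_of_ne hxy
  have hx : ∀ i, x ∉ (P i).tail.support := fun i => notMem_support_tail_of_isPath (hP i) (hnil i)
  have htail : ∀ i, ∀ z ∈ (P i).tail.support, z ∈ (P i).support := fun i z hz => by
    rw [← Walk.cons_support_tail (hnil i)]
    exact List.mem_cons_of_mem _ hz
  refine containsEvenSubdivision_of_adj_of_odd hxy (fun i => (P i).adj_snd (hnil i))
    (fun i => (P i).tail) (fun i => (hP i).tail) (fun i => ?_) hx fun i j hij z hi hj => ?_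
  · have := heven i
    rwa [← Walk.length_tail_add_one (hnil i), Nat.even_add_one, Nat.not_even_iff_odd] at this
  · exact (hdisj hij z (htail i z hi) (htail j z hj)).resolve_left (by rintro rfl; exact hx i hi)

end Subdivision

section Ears

/-- A step of a bipartite ear decomposition: some ear of the first subgraph is added to it. -/
def earStep (G : SimpleGraph V) : SetRel G.Subgraph G.Subgraph :=
  {(H, H') | ∃ (x y : V) (p : G.Walk x y), H.IsEar p ∧ H' = H ⊔ p.toSubgraph}

lemma odd_length_of_isPath_of_isNonseparable (hG : G.Colorable 2)
    (hfree : ¬ G.ContainsEvenSubdivision (completeBipartiteGraph (Fin 2) (Fin 3)))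
    (hS : IsNonseparable G S) (hx : x ∈ S) (hy : y ∈ S) (hxy : x ≠ y) {p : G.Walk x y}
    (hp : p.IsPath) (hpS : ∀ z ∈ p.support, z ∈ S → z = x ∨ z = y)
    (hconn : (G.induce S).Preconnected) : Odd p.length := by
  by_contra hodd
  obtain ⟨P, Q, h⟩ := hS.exists_isDisjointPathPair hconn hx hy
  have heven : Even p.length := Nat.not_odd_iff_even.1 hodd
  have hpP : InternallyDisjoint p P := fun z hz hzP => hpS z hz (h.mem_of_left z hzP)
  have hpQ : InternallyDisjoint p Q := fun z hz hzQ => hpS z hz (h.mem_of_right z hzQ)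
  refine hfree (containsEvenSubdivision_of_pairwise_internallyDisjoint hxy ![p, P, Q] ?_
    (fun i => (even_length_iff_of_colorable_two hG _ _).1 heven) ?_)
  · simp [Fin.forall_fin_succ, hp, h.isPath_left, h.isPath_right]
  · simp [Pairwise, Fin.forall_fin_succ, hpP, hpQ, hpP.symm, hpQ.symm, h.internallyDisjoint,
      h.internallyDisjoint.symm]

lemma exists_isPath_through_compl (hG : IsNonseparable G Set.univ) (hS : S.Nontrivial)
    (ha : a ∉ S) : ∃ x ∈ S, ∃ y ∈ S, x ≠ y ∧ ∃ p : G.Walk x y, p.IsPath ∧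
      (∀ z ∈ p.support, z ∈ S → z = x ∨ z = y) ∧ ∃ t ∈ p.support, t ∉ S := by
  obtain ⟨b, hb, c, hc, hbc⟩ := hS
  obtain ⟨W, -⟩ := exists_walk_of_preconnected_induce (hG c)
    (u := b) (v := a) ⟨trivial, hbc⟩ ⟨trivial, by rintro rfl; exact ha hc⟩
  obtain ⟨⟨⟨x, t⟩, hxt : G.Adj x t⟩, -, hx, ht⟩ := W.exists_boundary_dart S hb ha
  obtain ⟨d, hd, hdx⟩ := Set.Nontrivial.exists_ne ⟨b, hb, c, hc, hbc⟩ x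
  obtain ⟨R, hR⟩ := exists_walk_of_preconnected_induce (hG x)
    (u := t) (v := d) ⟨trivial, hxt.ne'⟩ ⟨trivial, hdx⟩
  obtain ⟨y, hy, q, hq, hqR, hqS⟩ := exists_isPath_forall_mem_support_imp_eq R hd
  have hxq : x ∉ q.support := fun h => (hR x (hqR x h)).2 rfl
  refine ⟨x, hx, y, hy, ?_, .cons hxt q, hq.cons hxq, ?_, t, by simp, ht⟩
  · rintro rfl
    exact hxq q.end_mem_support
  · simp only [Walk.support_cons, List.mem_cons]
    exact fun z hz hzS => hz.imp_right fun hz => hqS z hz hzS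

lemma exists_isEar_of_notMem_verts (hG : G.Colorable 2)
    (hfree : ¬ G.ContainsEvenSubdivision (completeBipartiteGraph (Fin 2) (Fin 3)))
    (huniv : IsNonseparable G Set.univ) {H : G.Subgraph} (hH : IsNonseparable G H.verts)
    (hnt : H.verts.Nontrivial) (ha : a ∉ H.verts) :
    ∃ (x y : V) (p : G.Walk x y), H.IsEar p ∧ ¬ p.toSubgraph ≤ H := by
  obtain ⟨x, hx, y, hy, hxy, p, hp, hpH, t, htp, ht⟩ := exists_isPath_through_compl huniv hnt ha
  exact ⟨x, y, p, ⟨hp, odd_length_of_isPath_of_isNonseparable hG hfree hH hx hy hxy hp hpH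
    (hH.preconnected ha), hx, hy, hpH⟩, fun hle => ht (hle.1 (by simpa using htp))⟩

lemma exists_isEar_of_isSpanning {H : G.Subgraph} (hH : H.IsSpanning) (hne : H ≠ ⊤) :
    ∃ (x y : V) (p : G.Walk x y), H.IsEar p ∧ ¬ p.toSubgraph ≤ H := by
  obtain ⟨x, y, hxy, hH'⟩ : ∃ x y, G.Adj x y ∧ ¬ H.Adj x y := by
    by_contra! hadj
    refine hne (top_le_iff.1 ⟨fun v _ => hH v, fun x y h => hadj x y h⟩)
  exact ⟨x, y, hxy.toWalk, ⟨.of_adj hxy, by simp, hH x, hH y, by simp⟩,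
    fun hle => hH' (hle.2 (by simp))⟩

lemma exists_earStep_lt (hG : G.Colorable 2)
    (hfree : ¬ G.ContainsEvenSubdivision (completeBipartiteGraph (Fin 2) (Fin 3)))
    (huniv : IsNonseparable G Set.univ) {H : G.Subgraph} (hH : IsNonseparable G H.verts)
    (hnt : H.verts.Nontrivial) (hne : H ≠ ⊤) : ∃ H', (H, H') ∈ earStep G ∧ H < H' := by
  obtain ⟨x, y, p, hp, hpH⟩ : ∃ (x y : V) (p : G.Walk x y), H.IsEar p ∧ ¬ p.toSubgraph ≤ H := by
    by_cases hspan : H.IsSpanning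
    · exact exists_isEar_of_isSpanning hspan hne
    · obtain ⟨a, ha⟩ := not_forall.1 hspan
      exact exists_isEar_of_notMem_verts hG hfree huniv hH hnt ha
  exact ⟨_, ⟨x, y, p, hp, rfl⟩, left_lt_sup.2 hpH⟩

lemma isNonseparable_verts_of_earStep {H H' : G.Subgraph} (h : (H, H') ∈ earStep G)
    (hH : IsNonseparable G H.verts) : IsNonseparable G H'.verts := by
  obtain ⟨x, y, p, ⟨hp, -, hx, hy, -⟩, rfl⟩ := h
  simpa only [Subgraph.verts_sup, Walk.verts_toSubgraph] using hH.union_support hx hy hp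

theorem exists_relSeries_earStep [Finite V] (hG : G.Colorable 2)
    (hfree : ¬ G.ContainsEvenSubdivision (completeBipartiteGraph (Fin 2) (Fin 3)))
    (huniv : IsNonseparable G Set.univ) (H : G.Subgraph) (hH : IsNonseparable G H.verts)
    (hnt : H.verts.Nontrivial) : ∃ s : RelSeries (earStep G), s.head = H ∧ s.last = ⊤ := by
  induction H using WellFoundedGT.induction with
  | ind H ih =>
    by_cases hne : H = ⊤
    · exact ⟨.singleton _ H, RelSeries.head_singleton H, hne⟩
    · obtain ⟨H', hstep, hlt⟩ := exists_earStep_lt hG hfree huniv hH hnt hne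
      obtain ⟨s, hhead, hlast⟩ := ih H' hlt (isNonseparable_verts_of_earStep hstep hH)
        (hnt.mono hlt.le.1)
      exact ⟨s.cons H (hhead ▸ hstep), s.head_cons H _, (s.last_cons H _).trans hlast⟩

end Ears

end EarDecomposition

theorem stmt_13 {V : Type*} [Fintype V] (G : SimpleGraph V)
    (h2 : G.TwoConnected) (hbip : G.Colorable 2)
    (h : ¬ G.ContainsEvenSubdivision (completeBipartiteGraph (Fin 2) (Fin 3)))
    {v : V} (c : G.Walk v v) (hc : c.IsCycle) :
    ∃ (m : ℕ) (Gs : Fin (m + 1) → G.Subgraph),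
      Gs 0 = c.toSubgraph ∧ Gs (Fin.last m) = ⊤ ∧
      ∀ i : Fin m, ∃ (x y : V) (p : G.Walk x y),
        (Gs i.castSucc).IsEar p ∧ Gs i.succ = Gs i.castSucc ⊔ p.toSubgraph := by
  have huniv := EarDecomposition.isNonseparable_univ_of_twoConnected h2
  have hcycle : EarDecomposition.IsNonseparable G c.toSubgraph.verts :=
    c.verts_toSubgraph ▸ EarDecomposition.isNonseparable_support_of_isCycle hc
  have hnontrivial : c.toSubgraph.verts.Nontrivial :=
    ⟨v, by simp, c.snd, by simp, (c.adj_snd hc.not_nil).ne⟩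
  obtain ⟨s, hhead, hlast⟩ :=
    EarDecomposition.exists_relSeries_earStep hbip h huniv c.toSubgraph hcycle hnontrivial
  exact ⟨s.length, s.toFun, hhead, hlast, s.step⟩
end

section
/- A 2-connected bipartite graph G contains no even subdivision of K_{2,3} if and only if G is planar and 1-cycle resonant (i.e., every cycle of G is a nice cycle: G − V(C) has a perfect matching for every cycle C). -/
/-- A graph is 1-cycle resonant if every cycle `C` is nice, i.e. `G - V(C)` has a
perfect matching (equivalently, `G` has a matching whose vertex set is the complement
of the vertex set of `C`). -/
def SimpleGraph.OneCycleResonant {V : Type*} (G : SimpleGraph V) : Prop :=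
  ∀ (v : V) (c : G.Walk v v), c.IsCycle →
    ∃ M : G.Subgraph, M.IsMatching ∧ M.verts = {w | w ∉ c.support}

/-!
Call a theta a triple of internally disjoint paths between two poles. An even subdivision of
`K_{2,3}` is a theta with poles of the same colour together with a choice of one inner vertex, of
the other colour, on each path; hence `G` contains one iff it contains a theta with equally
coloured poles.

If there is no such theta, the pigeonhole principle rules out subdivisions of `K₅` and `K_{3,3}`.
Moreover, grow a cycle `C` to all of `G` by adding ears. The ends of an ear lie on two internally
disjoint paths of the graph built so far, and these form a theta with the ear, so the ends have
different colours. Every ear therefore has evenly many inner vertices, and matching them along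
the ears gives a perfect matching of `G - V(C)`.

Conversely, let `θ` be a theta with equally coloured poles in a planar 1-cycle resonant graph. Any
two of its paths form a cycle, whose complement has a perfect matching. No component of `G - V(θ)`
has neighbours inside all three paths of `θ`, since these would give a subdivision of `K_{3,3}`. A
component that misses the interior of the third path is matched within itself by the matching
avoiding the other two; using the appropriate matching on each component yields a perfect matching
of `G - V(θ)`. But `G - V(θ)` and its union with the interior of one path cannot both have an even
number of vertices, as that interior is odd.
-/

namespace ThetaResonance

open SimpleGraph

variable {V W α β : Type*} {G : SimpleGraph V}

section Paths

lemma pairwise_fin_three {r : Fin 3 → Fin 3 → Prop} (hr : ∀ i j, r i j → r j i)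
    (h01 : r 0 1) (h02 : r 0 2) (h12 : r 1 2) : Pairwise r := by
  have : Std.Symm r := ⟨hr⟩
  refine Pairwise.of_lt fun i j hij => ?_
  fin_cases i <;> fin_cases j <;> first | assumption | exact absurd hij (by decide)

lemma isPath_append {a b c : V} {p : G.Walk a b} {q : G.Walk b c} (hp : p.IsPath) (hq : q.IsPath)
    (h : ∀ z ∈ p.support, z ∈ q.support → z = b) : (p.append q).IsPath := by
  rw [Walk.isPath_def, Walk.support_append, List.nodup_append']
  refine ⟨hp.support_nodup, hq.support_nodup.tail, fun z hzp hzq => ?_⟩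
  obtain rfl := h z hzp (List.mem_of_mem_tail hzq)
  have hnodup := hq.support_nodup
  rw [← Walk.cons_tail_support, List.nodup_cons] at hnodup
  exact hnodup.1 hzq

lemma exists_isPath_split {a b w : V} {p : G.Walk a b} (hp : p.IsPath) (hw : w ∈ p.support) :
    ∃ (q : G.Walk a w) (r : G.Walk w b), q.IsPath ∧ r.IsPath ∧ q.support ⊆ p.support ∧
      r.support ⊆ p.support ∧ ∀ z ∈ q.support, z ∈ r.support → z = w := by
  obtain ⟨q, r, hq, hr, rfl⟩ := hp.mem_support_iff_exists_append.mp hw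
  refine ⟨q, r, hq, hr, q.support_subset_support_append_left r,
    q.support_subset_support_append_right r, fun z hzq hzr => ?_⟩
  by_contra hzw
  exact hp.ne_of_mem_support_of_append hzw hzq hzr rfl

lemma exists_isPath_to_first_mem {a t : V} (p : G.Walk a t) {D : Set V} (ht : t ∈ D) :
    ∃ d ∈ D, ∃ q : G.Walk a d, q.IsPath ∧ q.support ⊆ p.support ∧
      ∀ z ∈ q.support, z ∈ D → z = d := by
  classical
  obtain ⟨d, hdD, hdp, hfirst⟩ := p.exists_mem_support_forall_mem_support_imp_eq
    (p.support.toFinset.filter (· ∈ D)) ⟨t, by simp [ht]⟩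
  have hsub := p.support_takeUntil_subset_support hdp
  refine ⟨d, (Finset.mem_filter.1 hdD).2, (p.takeUntil d hdp).bypass, Walk.bypass_isPath _,
    fun z hz => hsub (Walk.support_bypass_subset_support _ hz), fun z hz hzD => ?_⟩
  have hz' := Walk.support_bypass_subset_support _ hz
  exact hfirst z (by simp [hsub hz', hzD]) hz'

/-- Two walks with the same ends are internally disjoint if they share no vertex other than
those ends. -/
def InternallyDisjoint {u v : V} (p q : G.Walk u v) : Prop :=
  ∀ z ∈ p.support, z ∈ q.support → z = u ∨ z = v

lemma InternallyDisjoint.symm {u v : V} {p q : G.Walk u v} (h : InternallyDisjoint p q) :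
    InternallyDisjoint q p :=
  fun z hq hp => h z hp hq

lemma InternallyDisjoint.isCycle_append_reverse {u v : V} {p q : G.Walk u v}
    (h : InternallyDisjoint p q) (hp : p.IsPath) (hq : q.IsPath) (hlen : 1 < p.length) :
    (p.append q.reverse).IsCycle := by
  refine hp.isCycle_append hq.reverse (fun z hzp hzq => ?_) (Or.inl hlen)
  have hup := hp.support_nodup
  have hvq := hq.reverse.support_nodup
  rw [← Walk.cons_tail_support, List.nodup_cons] at hup hvq
  rcases h z (List.mem_of_mem_tail hzp) (by simpa using List.mem_of_mem_tail hzq) with rfl | rfl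
  · exact hup.1 hzp
  · exact hvq.1 hzq

lemma exists_internallyDisjoint_of_isCycle {v x y : V} {c : G.Walk v v} (hc : c.IsCycle)
    (hx : x ∈ c.support) (hy : y ∈ c.support) (hxy : x ≠ y) :
    ∃ p q : G.Walk x y, p.IsPath ∧ q.IsPath ∧ p.support ⊆ c.support ∧ q.support ⊆ c.support ∧
      InternallyDisjoint p q := by
  classical
  have hmem (z : V) : z ∈ (c.rotate x hx).support ↔ z ∈ c.support :=
    Walk.mem_support_rotate_iff c x hx
  have hrot := hc.rotate hx
  obtain ⟨p, q, hpq⟩ := (c.rotate x hx).mem_support_iff_exists_append.mp ((hmem y).2 hy)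
  simp only [hpq, Walk.mem_support_append_iff] at hmem hrot
  refine ⟨p, q.reverse, hrot.isPath_of_append_left fun h => hxy h.eq.symm,
    (hrot.isPath_of_append_right fun h => hxy h.eq).reverse, fun z hz => (hmem z).1 (Or.inl hz),
    fun z hz => (hmem z).1 (Or.inr (by simpa using hz)), fun z hzp hzq => ?_⟩
  have hnodup := hrot.support_nodup
  rw [Walk.tail_support_append, List.nodup_append'] at hnodup
  rw [Walk.support_reverse, List.mem_reverse, Walk.mem_support_iff] at hzq
  rw [Walk.mem_support_iff] at hzp
  have := @hnodup.2.2 z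
  tauto

lemma exists_tripod {z : V} {x : Fin 3 → V} (w : ∀ i, G.Walk z (x i)) :
    ∃ (e : V) (T : ∀ i, G.Walk e (x i)), (∀ i, (T i).IsPath) ∧
      (∀ i, ∀ t ∈ (T i).support, ∃ j, t ∈ (w j).support) ∧
      Pairwise fun i j => ∀ t ∈ (T i).support, t ∈ (T j).support → t = e := by
  classical
  obtain ⟨R, hR, hRw⟩ : ∃ R : G.Walk (x 1) (x 0), R.IsPath ∧
      R.support ⊆ ((w 1).reverse.append (w 0)).support :=
    ⟨_, Walk.bypass_isPath _, Walk.support_bypass_subset_support _⟩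
  obtain ⟨e, he, Q, hQ, hQw, hQR⟩ :=
    exists_isPath_to_first_mem ((w 2).reverse.append (w 0)) (D := {t | t ∈ R.support}) (by simp)
  obtain ⟨R₁, R₀, hR₁, hR₀, hR₁R, hR₀R, hdisj⟩ := exists_isPath_split hR he
  have hRw' : ∀ t ∈ R.support, ∃ j, t ∈ (w j).support := fun t ht => by
    rcases (Walk.mem_support_append_iff _ _).1 (hRw ht) with h | h
    exacts [⟨1, by simpa using h⟩, ⟨0, h⟩]
  have hQw' : ∀ t ∈ Q.support, ∃ j, t ∈ (w j).support := fun t ht => by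
    rcases (Walk.mem_support_append_iff _ _).1 (hQw ht) with h | h
    exacts [⟨2, by simpa using h⟩, ⟨0, h⟩]
  refine ⟨e, fun | 0 => R₀ | 1 => R₁.reverse | 2 => Q.reverse, ?_, ?_, ?_⟩
  · intro i
    fin_cases i
    exacts [hR₀, hR₁.reverse, hQ.reverse]
  · intro i t ht
    fin_cases i
    · exact hRw' t (hR₀R ht)
    · exact hRw' t (hR₁R (by simpa using ht))
    · exact hQw' t (by simpa using ht)
  · refine pairwise_fin_three (fun i j h t hj hi => h t hi hj) ?_ ?_ ?_ <;> intro t h h'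
    · exact hdisj t (by simpa using h') h
    · exact hQR t (by simpa using h') (hR₀R h)
    · exact hQR t (by simpa using h') (hR₁R (by simpa using h))

end Paths

section Fans

/-- A fan from `x` to the vertices `y j`: paths from `x` to each `y j ≠ x` that pairwise share
only the vertex `x`. -/
structure Fan (G : SimpleGraph V) (x : V) (y : β → V) where
  path : ∀ j, G.Walk x (y j)
  isPath : ∀ j, (path j).IsPath
  end_ne : ∀ j, y j ≠ x
  eq_of_mem_of_mem : Pairwise fun i j => ∀ t ∈ (path i).support, t ∈ (path j).support → t = x

namespace Fan

variable {x : V} {y : β → V}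

/-- The set of vertices covered by a fan. -/
def verts (F : Fan G x y) : Set V :=
  {t | ∃ j, t ∈ (F.path j).support}

lemma mem_verts {F : Fan G x y} {j : β} {t : V} (ht : t ∈ (F.path j).support) : t ∈ F.verts :=
  ⟨j, ht⟩

lemma eq_of_end_mem (F : Fan G x y) {j k : β} (h : y k ∈ (F.path j).support) : k = j := by
  by_contra hne
  exact F.end_ne k (F.eq_of_mem_of_mem hne (y k) (Walk.end_mem_support _) h)

lemma end_injective (F : Fan G x y) : Function.Injective y :=
  fun i j hij => F.eq_of_end_mem (by rw [hij]; exact Walk.end_mem_support _)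

/-- Two fans to `y` meet only at the ends `y j`. -/
def MeetAtEnds {x' : V} (F : Fan G x y) (F' : Fan G x' y) : Prop :=
  F.verts ∩ F'.verts ⊆ Set.range y

namespace MeetAtEnds

variable {x' : V} {F : Fan G x y} {F' : Fan G x' y}

lemma symm (h : F.MeetAtEnds F') : F'.MeetAtEnds F :=
  fun _ ht => h ht.symm

lemma eq_end (h : F.MeetAtEnds F') {j j' : β} {t : V} (ht : t ∈ (F.path j).support)
    (ht' : t ∈ (F'.path j').support) : t = y j ∧ t = y j' := by
  obtain ⟨k, rfl⟩ := h ⟨mem_verts ht, mem_verts ht'⟩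
  exact ⟨congrArg y (F.eq_of_end_mem ht), congrArg y (F'.eq_of_end_mem ht')⟩

lemma center_ne (h : F.MeetAtEnds F') [Nonempty β] : x ≠ x' := by
  rintro rfl
  obtain ⟨j⟩ := ‹Nonempty β›
  exact F.end_ne j (h.eq_end (j := j) (j' := j) (Walk.start_mem_support _)
    (Walk.start_mem_support _)).1.symm

end MeetAtEnds

lemma eq_of_path_mem_of_mem {x : α → V} (F : ∀ i, Fan G (x i) y)
    (h : Pairwise fun i i' => (F i).MeetAtEnds (F i')) {i i' : α} {j j' : β}
    (hne : ¬(i = i' ∧ j = j')) {t : V} (ht : t ∈ ((F i).path j).support)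
    (ht' : t ∈ ((F i').path j').support) : (t = x i ∨ t = y j) ∧ (t = x i' ∨ t = y j') := by
  by_cases hi : i = i'
  · subst hi
    have := (F i).eq_of_mem_of_mem (fun hj => hne ⟨rfl, hj⟩) t ht ht'
    exact ⟨Or.inl this, Or.inl this⟩
  · exact ((h hi).eq_end ht ht').imp Or.inr Or.inr

lemma sumElim_injective [Nonempty α] [Nonempty β] {x : α → V} (F : ∀ i, Fan G (x i) y)
    (h : Pairwise fun i i' => (F i).MeetAtEnds (F i')) : Function.Injective (Sum.elim x y) := by
  obtain ⟨i₀⟩ := ‹Nonempty α›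
  refine Function.Injective.sumElim (fun i i' hi => ?_) (F i₀).end_injective
    fun i j hij => (F i).end_ne j hij.symm
  by_contra hne
  exact (h hne).center_ne hi

lemma exists_isPath_of_completeBipartiteGraph_adj {plen : ℕ → Prop} {x : α → V}
    (F : ∀ i, Fan G (x i) y) (hlen : ∀ i j, plen ((F i).path j).length) {s t : α ⊕ β}
    (hst : (completeBipartiteGraph α β).Adj s t) :
    ∃ p : G.Walk (Sum.elim x y s) (Sum.elim x y t), p.IsPath ∧ plen p.length ∧
      ∃ i j, s(s, t) = s(Sum.inl i, Sum.inr j) ∧ p.support ⊆ ((F i).path j).support := by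
  rcases s with i | j <;> rcases t with i' | j'
  · simp at hst
  · exact ⟨_, (F i).isPath j', hlen i j', i, j', rfl, fun _ => id⟩
  · exact ⟨((F i').path j).reverse, ((F i').isPath j).reverse, by simpa using hlen i' j, i', j,
      Sym2.eq_swap, fun _ => by simp⟩
  · simp at hst

theorem hasSubdivision_completeBipartiteGraph [Nonempty α] [Nonempty β] {plen : ℕ → Prop}
    {x : α → V} (F : ∀ i, Fan G (x i) y) (h : Pairwise fun i i' => (F i).MeetAtEnds (F i'))
    (hlen : ∀ i j, plen ((F i).path j).length) :
    G.HasSubdivision (completeBipartiteGraph α β) plen := by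
  choose p hp hplen I J hIJ hsub using fun s t =>
    exists_isPath_of_completeBipartiteGraph_adj F hlen (s := s) (t := t)
  have mem_branch {s t : α ⊕ β} {i : α} {j : β} (hst : s(s, t) = s(Sum.inl i, Sum.inr j)) {z : V}
      (hz : z = x i ∨ z = y j) : z = Sum.elim x y s ∨ z = Sum.elim x y t := by
    rw [← Sym2.mem_iff, ← Sym2.map_mk, hst]
    simpa using hz
  refine ⟨Sum.elim x y, sumElim_injective F h, p, hp, hplen, fun s t hst w hw => ?_,
    fun s t s' t' hst hst' hne z hz hz' => ?_⟩
  · have hw' := hsub s t hst hw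
    suffices w ∈ s(s, t) from Sym2.mem_iff.1 this
    rw [hIJ s t hst]
    rcases w with k | k
    · by_cases hk : k = I s t hst
      · simp [hk]
      · have := (h hk).eq_end (j := J s t hst) (Walk.start_mem_support _) hw'
        exact absurd this.1.symm ((F k).end_ne _)
    · simp [(F _).eq_of_end_mem hw']
  · have := eq_of_path_mem_of_mem F h (fun hij => hne ?_) (hsub s t hst hz) (hsub s' t' hst' hz')
    · exact this.imp (mem_branch (hIJ s t hst)) (mem_branch (hIJ s' t' hst'))
    · rw [hIJ s t hst, hIJ s' t' hst', hij.1, hij.2]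

end Fan

end Fans

section Thetas

/-- A theta subgraph of `G` with poles `u` and `v`: three pairwise internally disjoint paths
between these two distinct vertices. -/
structure Theta (G : SimpleGraph V) (u v : V) where
  ne : u ≠ v
  path : Fin 3 → G.Walk u v
  isPath : ∀ k, (path k).IsPath
  disjoint : Pairwise fun k l => InternallyDisjoint (path k) (path l)

namespace Theta

variable {u v : V}

/-- The set of vertices covered by a theta. -/
def verts (θ : Theta G u v) : Set V :=
  {t | ∃ k, t ∈ (θ.path k).support}

/-- The set of inner vertices of the `k`-th path of a theta. -/
def interior (θ : Theta G u v) (k : Fin 3) : Set V :=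
  {t | t ∈ (θ.path k).support ∧ t ≠ u ∧ t ≠ v}

/-- Gluing two fans along their ends produces a theta. -/
def ofFans {y : Fin 3 → V} (A : Fan G u y) (B : Fan G v y) (h : A.MeetAtEnds B) :
    Theta G u v where
  ne := h.center_ne
  path k := (A.path k).append (B.path k).reverse
  isPath k := isPath_append (A.isPath k) (B.isPath k).reverse
    fun z hA hB => (h.eq_end hA (by simpa using hB)).1
  disjoint k l hkl z hk hl := by
    simp only [Walk.mem_support_append_iff, Walk.support_reverse, List.mem_reverse] at hk hl
    rcases hk with hk | hk <;> rcases hl with hl | hl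
    · exact Or.inl (A.eq_of_mem_of_mem hkl z hk hl)
    · obtain ⟨hzk, hzl⟩ := h.eq_end hk hl
      exact absurd (A.end_injective (hzk.symm.trans hzl)) hkl
    · obtain ⟨hzl, hzk⟩ := h.eq_end hl hk
      exact absurd (A.end_injective (hzk.symm.trans hzl)) hkl
    · exact Or.inr (B.eq_of_mem_of_mem hkl z hk hl)

lemma exists_fans (θ : Theta G u v) {y : Fin 3 → V} (hy : ∀ k, y k ∈ θ.interior k) :
    ∃ (A : Fan G u y) (B : Fan G v y), A.verts ⊆ θ.verts ∧ B.verts ⊆ θ.verts ∧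
      A.MeetAtEnds B := by
  choose q r hq hr hqθ hrθ hqr using fun k => exists_isPath_split (θ.isPath k) (hy k).1
  have hvq (k) : v ∉ (q k).support := fun h => (hy k).2.2 (hqr k v h (Walk.end_mem_support _)).symm
  have hur (k) : u ∉ (r k).support := fun h =>
    (hy k).2.1 (hqr k u (Walk.start_mem_support _) h).symm
  refine ⟨⟨q, hq, fun k => (hy k).2.1, fun k l hkl t hk hl => ?_⟩,
    ⟨fun k => (r k).reverse, fun k => (hr k).reverse, fun k => (hy k).2.2,
      fun k l hkl t hk hl => ?_⟩, ?_, ?_, ?_⟩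
  · exact (θ.disjoint hkl t (hqθ k hk) (hqθ l hl)).resolve_right fun h => hvq k (h ▸ hk)
  · rw [Walk.support_reverse, List.mem_reverse] at hk hl
    exact (θ.disjoint hkl t (hrθ k hk) (hrθ l hl)).resolve_left fun h => hur k (h ▸ hk)
  · rintro t ⟨k, hk⟩
    exact ⟨k, hqθ k hk⟩
  · rintro t ⟨k, hk⟩
    exact ⟨k, hrθ k (by simpa using hk)⟩
  · rintro t ⟨⟨k, hk⟩, l, hl⟩
    replace hl : t ∈ (r l).support := by simpa using hl
    by_cases hkl : k = l
    · subst hkl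
      exact ⟨k, (hqr k t hk hl).symm⟩
    · rcases θ.disjoint hkl t (hqθ k hk) (hrθ l hl) with rfl | rfl
      exacts [absurd hl (hur l), absurd hk (hvq k)]

end Theta

lemma exists_theta_of_hasSubdivision {H : SimpleGraph W} {plen : ℕ → Prop}
    (h : G.HasSubdivision H plen) :
    ∃ f : W → V, (∀ a b, H.Adj a b → ∃ p : G.Walk (f a) (f b), plen p.length) ∧
      ∀ a b, a ≠ b → (Fin 3 ↪ H.commonNeighbors a b) → Nonempty (Theta G (f a) (f b)) := by
  obtain ⟨f, hf, p, hp, hlen, -, hmeet⟩ := h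
  refine ⟨f, fun a b h => ⟨p a b h, hlen a b h⟩, fun a b hab w => ?_⟩
  have ha (k) : H.Adj a (w k) := (w k).2.1
  have hb (k) : H.Adj b (w k) := (w k).2.2
  have hne {k l} (hkl : k ≠ l) : (w k : W) ≠ w l := fun h => hkl (w.injective (Subtype.ext h))
  let fan (d : W) (hd : ∀ k, H.Adj d (w k)) : Fan G (f d) fun k => f (w k) :=
    { path := fun k => p d (w k) (hd k)
      isPath := fun k => hp _ _ _
      end_ne := fun k => hf.ne (hd k).ne'
      eq_of_mem_of_mem := fun k l hkl t hk hl => by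
        have hedge : s(d, (w k : W)) ≠ s(d, (w l : W)) := fun h => hne hkl (Sym2.congr_right.1 h)
        obtain ⟨h | rfl, h' | h'⟩ := hmeet _ _ _ _ (hd k) (hd l) hedge t hk hl
        exacts [h, h, h', absurd (hf h') (hne hkl)] }
  refine ⟨Theta.ofFans (fan a ha) (fan b hb) ?_⟩
  rintro t ⟨⟨k, hk⟩, l, hl⟩
  have hedge : s(a, (w k : W)) ≠ s(b, (w l : W)) := fun h => by
    rcases Sym2.eq_iff.1 h with h | h
    exacts [hab h.1, (ha l).ne h.1]
  obtain ⟨rfl | h, h' | h'⟩ := hmeet _ _ _ _ (ha k) (hb l) hedge t hk hl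
  exacts [absurd (hf h') hab, ⟨l, h'.symm⟩, ⟨k, h.symm⟩, ⟨k, h.symm⟩]

lemma odd_length_iff_color_ne (c : G.Coloring Bool) {u v : V} (p : G.Walk u v) :
    Odd p.length ↔ c u ≠ c v := by
  rw [c.odd_length_iff_not_congr]
  cases c u <;> cases c v <;> simp

theorem containsEvenSubdivision_iff_exists_theta (c : G.Coloring Bool) :
    G.ContainsEvenSubdivision (completeBipartiteGraph (Fin 2) (Fin 3)) ↔
      ∃ u v, c u = c v ∧ Nonempty (Theta G u v) := by
  constructor
  · intro h
    obtain ⟨f, hwalk, htheta⟩ := exists_theta_of_hasSubdivision h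
    have hcolor (i : Fin 2) : c (f (Sum.inl i)) ≠ c (f (Sum.inr 0)) := by
      obtain ⟨p, hp⟩ := hwalk (Sum.inl i) (Sum.inr 0) (by simp)
      exact (odd_length_iff_color_ne c p).1 hp
    refine ⟨f (Sum.inl 0), f (Sum.inl 1),
      (Bool.eq_not.2 (hcolor 0)).trans (Bool.eq_not.2 (hcolor 1)).symm,
      htheta _ _ (by simp) ⟨fun k => ⟨Sum.inr k, by simp [mem_commonNeighbors]⟩, ?_⟩⟩
    intro k l hkl
    simpa using hkl
  · rintro ⟨u, v, huv, ⟨θ⟩⟩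
    have hadj (k) : G.Adj u (θ.path k).snd := (θ.path k).adj_snd (Walk.not_nil_of_ne θ.ne)
    obtain ⟨A, B, -, -, hAB⟩ := θ.exists_fans (y := fun k => (θ.path k).snd) fun k =>
      ⟨Walk.getVert_mem_support _ _, (hadj k).ne',
        fun h => c.valid (hadj k) (by rw [h, huv])⟩
    refine Fan.hasSubdivision_completeBipartiteGraph (x := ![u, v])
      (fun | 0 => A | 1 => B) (fun i j hij => ?_) fun i j => ?_
    · fin_cases i <;> fin_cases j
      exacts [absurd rfl hij, hAB, hAB.symm, absurd rfl hij]
    · rw [odd_length_iff_color_ne c]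
      fin_cases i
      exacts [c.valid (hadj j), huv ▸ c.valid (hadj j)]

theorem kuratowskiPlanar_of_isEmpty_theta (c : G.Coloring Bool)
    (h : ∀ u v, c u = c v → IsEmpty (Theta G u v)) : G.KuratowskiPlanar := by
  constructor <;> intro hsub <;> obtain ⟨f, -, htheta⟩ := exists_theta_of_hasSubdivision hsub
  · obtain ⟨a, b, hab, hc⟩ :=
      Fintype.exists_ne_map_eq_of_card_lt (fun a => c (f a)) (by simp)
    have hcard : Fintype.card (Fin 3) ≤
        Fintype.card ((completeGraph (Fin 5)).commonNeighbors a b) := by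
      simp [card_commonNeighbors_top hab]
    obtain ⟨w⟩ := Function.Embedding.nonempty_of_card_le hcard
    exact not_isEmpty_iff.2 (htheta a b hab w) (h _ _ hc)
  · obtain ⟨i, j, hij, hc⟩ :=
      Fintype.exists_ne_map_eq_of_card_lt (fun i : Fin 3 => c (f (Sum.inl i))) (by simp)
    refine not_isEmpty_iff.2 (htheta _ _ (Sum.inl_injective.ne hij)
      ⟨fun k => ⟨Sum.inr k, by simp [mem_commonNeighbors]⟩, fun k l hkl => ?_⟩) (h _ _ hc)
    simpa using hkl

end Thetas

section Matchings

lemma isMatching_sup {M N : G.Subgraph} (hM : M.IsMatching) (hN : N.IsMatching)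
    (h : Disjoint M.verts N.verts) : (M ⊔ N).IsMatching :=
  hM.sup hN (by rwa [hM.support_eq_verts, hN.support_eq_verts])

lemma even_ncard_verts_of_isMatching [Finite V] {M : G.Subgraph} (hM : M.IsMatching) :
    Even M.verts.ncard := by
  classical
  have := Fintype.ofFinite V
  rw [Set.ncard_eq_toFinset_card']
  exact hM.even_card

lemma exists_isMatching_verts_eq_support {a b : V} {p : G.Walk a b} (hp : p.IsPath) :
    (Odd p.length → ∃ M : G.Subgraph, M.IsMatching ∧ M.verts = {z | z ∈ p.support}) ∧
    (Even p.length → ∃ M : G.Subgraph, M.IsMatching ∧ M.verts = {z | z ∈ p.support} \ {a}) := by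
  induction p with
  | nil => exact ⟨by simp, fun _ => ⟨⊥, fun v hv => absurd hv (by simp), by ext; simp⟩⟩
  | @cons a d b h q ih =>
    obtain ⟨hq, ha⟩ := (Walk.cons_isPath_iff h q).1 hp
    obtain ⟨hodd, heven⟩ := ih hq
    rw [Walk.length_cons, Nat.odd_add_one, Nat.even_add_one, Nat.not_odd_iff_even,
      Nat.not_even_iff_odd]
    refine ⟨fun hlen => ?_, fun hlen => ?_⟩
    · obtain ⟨M, hM, hMq⟩ := heven hlen
      refine ⟨G.subgraphOfAdj h ⊔ M,
        isMatching_sup (Subgraph.IsMatching.subgraphOfAdj h) hM ?_, ?_⟩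
      · simp [hMq, ha]
      · ext z
        by_cases hz : z = d <;> simp [hMq, hz]
    · obtain ⟨M, hM, hMq⟩ := hodd hlen
      refine ⟨M, hM, hMq.trans (Set.ext fun z => ?_)⟩
      by_cases hz : z = a <;> simp [hz, ha]

lemma exists_isMatching_interior {a b : V} {p : G.Walk a b} (hp : p.IsPath)
    (hlen : Odd p.length) :
    ∃ M : G.Subgraph, M.IsMatching ∧ M.verts = {z | z ∈ p.support} \ {a, b} := by
  cases p with
  | nil => simp at hlen
  | cons h q =>
    obtain ⟨hq, ha⟩ := (Walk.cons_isPath_iff h q).1 hp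
    have heven : Even q.reverse.length := by
      simpa [Nat.odd_add_one] using hlen
    obtain ⟨M, hM, hMq⟩ := (exists_isMatching_verts_eq_support hq.reverse).2 heven
    refine ⟨M, hM, hMq.trans (Set.ext fun z => ?_)⟩
    by_cases hz : z = a <;> simp [hz, ha]

end Matchings

section Ears

/-- A set of vertices is cycle-connected if any two of its vertices lie on a cycle inside it. -/
def CycleConnected (G : SimpleGraph V) (S : Set V) : Prop :=
  ∀ x ∈ S, ∀ y ∈ S, x ≠ y → ∃ (v : V) (c : G.Walk v v), c.IsCycle ∧ (∀ z ∈ c.support, z ∈ S) ∧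
    x ∈ c.support ∧ y ∈ c.support

/-- An ear of a set `S` of vertices: a path that joins two distinct vertices of `S` through
at least one vertex outside `S` and otherwise avoids `S`. -/
structure IsEar (S : Set V) {x y : V} (p : G.Walk x y) : Prop where
  isPath : p.IsPath
  ne : x ≠ y
  start_mem : x ∈ S
  end_mem : y ∈ S
  eq_or_eq : ∀ z ∈ p.support, z ∈ S → z = x ∨ z = y
  exists_notMem : ∃ z ∈ p.support, z ∉ S

variable {S : Set V} {x y : V}

lemma IsEar.one_lt_length {p : G.Walk x y} (hp : IsEar S p) : 1 < p.length := by
  obtain ⟨z, hz, hzS⟩ := hp.exists_notMem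
  have hx := hp.start_mem
  have hy := hp.end_mem
  match p with
  | .nil => exact absurd rfl hp.ne
  | .cons _ .nil => aesop
  | .cons _ (.cons _ _) => simp

lemma IsEar.internallyDisjoint {p q : G.Walk x y} (hp : IsEar S p)
    (hq : ∀ z ∈ q.support, z ∈ S) : InternallyDisjoint p q :=
  fun z hzp hzq => hp.eq_or_eq z hzp (hq z hzq)

lemma exists_walk_notMem_of_twoConnected (h2 : G.TwoConnected) {v a b : V} (ha : a ≠ v)
    (hb : b ≠ v) : ∃ p : G.Walk a b, v ∉ p.support := by
  obtain ⟨p⟩ := (h2.2 v).preconnected ⟨a, by simp [ha]⟩ ⟨b, by simp [hb]⟩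
  suffices hv : v ∉ (p.map (Subgraph.hom _)).support from ⟨_, hv⟩
  intro hv
  rw [Walk.support_map, List.mem_map] at hv
  obtain ⟨z, -, hzv⟩ := hv
  exact z.2.2 hzv

lemma exists_isEar (h2 : G.TwoConnected) (hS : S.Nontrivial) (hne : S ≠ Set.univ) :
    ∃ (x y : V) (p : G.Walk x y), IsEar S p := by
  obtain ⟨t, ht⟩ := (Set.ne_univ_iff_exists_notMem S).1 hne
  obtain ⟨s, hs, s', hs', hss'⟩ := hS
  obtain ⟨p, -⟩ := exists_walk_notMem_of_twoConnected h2 hss' (ne_of_mem_of_not_mem hs' ht).symm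
  obtain ⟨d, -, hdS, hdS'⟩ := p.exists_boundary_dart S hs ht
  obtain ⟨s'', hs'', hsd⟩ := Set.Nontrivial.exists_ne ⟨s, hs, s', hs', hss'⟩ d.fst
  obtain ⟨r, hr⟩ := exists_walk_notMem_of_twoConnected h2 d.adj.ne' hsd
  obtain ⟨y, hy, q, hq, hqr, hqS⟩ := exists_isPath_to_first_mem r hs''
  have hdq : d.fst ∉ q.support := fun h => hr (hqr h)
  refine ⟨d.fst, y, .cons d.adj q, hq.cons hdq, fun h => hdq (h ▸ q.end_mem_support), hdS, hy,
    fun z hz hzS => ?_, d.snd, by simp, hdS'⟩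
  rw [Walk.support_cons, List.mem_cons] at hz
  exact hz.imp_right fun h => hqS z h hzS

lemma InternallyDisjoint.exists_isPath_through {t d : V} {A B : G.Walk x t} {Q : G.Walk y d}
    (hAB : InternallyDisjoint A B) (hA : A.IsPath) (hB : B.IsPath) (hQ : Q.IsPath) (hdx : d ≠ x)
    (hd : d ∈ A.support) (hmeet : ∀ z ∈ Q.support, z ∈ A.support ∨ z ∈ B.support → z = d) :
    ∃ R : G.Walk x y, R.IsPath ∧ t ∈ R.support ∧
      ∀ z ∈ R.support, z ∈ A.support ∨ z ∈ B.support ∨ z ∈ Q.support := by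
  obtain ⟨A₁, A₂, -, hA₂, -, hA₂A, hsplit⟩ := exists_isPath_split hA hd
  have hx : x ∉ A₂.support := fun h => hdx (hsplit x (Walk.start_mem_support _) h).symm
  have htail : (A₂.reverse.append Q.reverse).IsPath :=
    isPath_append hA₂.reverse hQ.reverse fun z hzA hzQ =>
      hmeet z (by simpa using hzQ) (Or.inl (hA₂A (by simpa using hzA)))
  refine ⟨B.append (A₂.reverse.append Q.reverse), isPath_append hB htail fun z hzB hz => ?_,
    by simp, fun z hz => ?_⟩
  · have hzA₂ : z ∈ A₂.support := by
      simp only [Walk.mem_support_append_iff, Walk.support_reverse, List.mem_reverse] at hz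
      refine hz.elim id fun hzQ => ?_
      rw [hmeet z hzQ (Or.inr hzB)]
      exact Walk.start_mem_support _
    exact (hAB z (hA₂A hzA₂) hzB).resolve_left fun h => hx (h ▸ hzA₂)
  · simp only [Walk.mem_support_append_iff, Walk.support_reverse, List.mem_reverse] at hz
    have := @hA₂A z
    tauto

namespace CycleConnected

lemma exists_internallyDisjoint (hS : CycleConnected G S) (hx : x ∈ S) (hy : y ∈ S)
    (hxy : x ≠ y) :
    ∃ p q : G.Walk x y, p.IsPath ∧ q.IsPath ∧ (∀ z ∈ p.support, z ∈ S) ∧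
      (∀ z ∈ q.support, z ∈ S) ∧ InternallyDisjoint p q := by
  obtain ⟨v, c, hc, hcS, hxc, hyc⟩ := hS x hx y hy hxy
  obtain ⟨p, q, hp, hq, hpc, hqc, hpq⟩ := exists_internallyDisjoint_of_isCycle hc hxc hyc hxy
  exact ⟨p, q, hp, hq, fun z hz => hcS z (hpc hz), fun z hz => hcS z (hqc hz), hpq⟩

lemma exists_walk_notMem (hS : CycleConnected G S) {a b : V} (ha : a ∈ S) (hb : b ∈ S)
    (hab : a ≠ b) (hxa : x ≠ a) (hxb : x ≠ b) :
    ∃ p : G.Walk a b, (∀ z ∈ p.support, z ∈ S) ∧ x ∉ p.support := by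
  obtain ⟨p, q, -, -, hpS, hqS, hpq⟩ := hS.exists_internallyDisjoint ha hb hab
  by_cases hxp : x ∈ p.support
  · exact ⟨q, hqS, fun hxq => (hpq x hxp hxq).elim hxa hxb⟩
  · exact ⟨p, hpS, hxp⟩

lemma exists_isPath_through (hS : CycleConnected G S) {t : V} (hx : x ∈ S) (hy : y ∈ S)
    (ht : t ∈ S) (hxy : x ≠ y) :
    ∃ R : G.Walk x y, R.IsPath ∧ t ∈ R.support ∧ ∀ z ∈ R.support, z ∈ S := by
  by_cases hend : t = x ∨ t = y
  · obtain ⟨p, -, hp, -, hpS, -⟩ := hS.exists_internallyDisjoint hx hy hxy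
    exact ⟨p, hp, by rcases hend with rfl | rfl <;> simp, hpS⟩
  obtain ⟨htx, hty⟩ := not_or.1 hend
  obtain ⟨Q, hQS, hxQ⟩ := hS.exists_walk_notMem hy ht (Ne.symm hty) hxy (Ne.symm htx)
  obtain ⟨A, B, hA, hB, hAS, hBS, hAB⟩ := hS.exists_internallyDisjoint hx ht (Ne.symm htx)
  obtain ⟨d, hd, Q', hQ', hQ'Q, hfirst⟩ :=
    exists_isPath_to_first_mem Q (D := {z | z ∈ A.support ∨ z ∈ B.support}) (by simp)
  have hdx : d ≠ x := fun h => hxQ (h ▸ hQ'Q (Walk.end_mem_support _))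
  have hR : ∃ R : G.Walk x y, R.IsPath ∧ t ∈ R.support ∧
      ∀ z ∈ R.support, z ∈ A.support ∨ z ∈ B.support ∨ z ∈ Q'.support := by
    rcases hd with hd | hd
    · exact hAB.exists_isPath_through hA hB hQ' hdx hd hfirst
    · simpa only [or_left_comm] using hAB.symm.exists_isPath_through hB hA hQ' hdx hd
        fun z hz h => hfirst z hz h.symm
  obtain ⟨R, hR, htR, hsub⟩ := hR
  refine ⟨R, hR, htR, fun z hz => ?_⟩
  rcases hsub z hz with h | h | h
  exacts [hAS z h, hBS z h, hQS z (hQ'Q h)]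

lemma union_isEar (hS : CycleConnected G S) {p : G.Walk x y} (hp : IsEar S p) :
    CycleConnected G (S ∪ {z | z ∈ p.support}) := by
  have hcycle (t) (ht : t ∈ S) : ∃ (v : V) (c : G.Walk v v), c.IsCycle ∧
      (∀ z ∈ c.support, z ∈ S ∪ {z | z ∈ p.support}) ∧ t ∈ c.support ∧
      ∀ z ∈ p.support, z ∈ c.support := by
    obtain ⟨R, hR, htR, hRS⟩ := hS.exists_isPath_through hp.start_mem hp.end_mem ht hp.ne
    refine ⟨x, p.append R.reverse, (hp.internallyDisjoint hRS).isCycle_append_reverse hp.isPath hR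
      hp.one_lt_length, fun z hz => ?_, by simp [htR], fun z hz => by simp [hz]⟩
    simp only [Walk.mem_support_append_iff, Walk.support_reverse, List.mem_reverse] at hz
    exact hz.symm.imp_left (hRS z)
  rintro s (hs | hs) t (ht | ht) hst
  · obtain ⟨v, c, hc, hcS, hsc, htc⟩ := hS s hs t ht hst
    exact ⟨v, c, hc, fun z hz => Or.inl (hcS z hz), hsc, htc⟩
  · obtain ⟨v, c, hc, hcS, hsc, hpc⟩ := hcycle s hs
    exact ⟨v, c, hc, hcS, hsc, hpc t ht⟩
  · obtain ⟨v, c, hc, hcS, htc, hpc⟩ := hcycle t ht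
    exact ⟨v, c, hc, hcS, hpc s hs, htc⟩
  · obtain ⟨v, c, hc, hcS, -, hpc⟩ := hcycle x hp.start_mem
    exact ⟨v, c, hc, hcS, hpc s hs, hpc t ht⟩

lemma nonempty_theta (hS : CycleConnected G S) {p : G.Walk x y} (hp : IsEar S p) :
    Nonempty (Theta G x y) := by
  obtain ⟨A, B, hA, hB, hAS, hBS, hAB⟩ :=
    hS.exists_internallyDisjoint hp.start_mem hp.end_mem hp.ne
  refine ⟨⟨hp.ne, ![A, B, p], fun k => ?_, pairwise_fin_three (fun _ _ => .symm) hAB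
    (hp.internallyDisjoint hAS).symm (hp.internallyDisjoint hBS).symm⟩⟩
  fin_cases k
  exacts [hA, hB, hp.isPath]

end CycleConnected

/-- The invariant of the ear decomposition: `S` is cycle-connected, contains `C`, and the
vertices of `S` outside `C` can be perfectly matched. -/
structure IsMatchedExtension (G : SimpleGraph V) (C S : Set V) : Prop where
  subset : C ⊆ S
  cycleConnected : CycleConnected G S
  exists_isMatching : ∃ M : G.Subgraph, M.IsMatching ∧ M.verts = S \ C

lemma IsMatchedExtension.union_isEar {C : Set V} (hS : IsMatchedExtension G C S) {p : G.Walk x y}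
    (hp : IsEar S p) (hlen : Odd p.length) :
    IsMatchedExtension G C (S ∪ {z | z ∈ p.support}) := by
  obtain ⟨M, hM, hMS⟩ := hS.exists_isMatching
  obtain ⟨N, hN, hNp⟩ := exists_isMatching_interior hp.isPath hlen
  have hout {z : V} (hz : z ∈ N.verts) : z ∉ S := fun hzS => by
    rw [hNp] at hz
    exact hz.2 (hp.eq_or_eq z hz.1 hzS)
  refine ⟨hS.subset.trans Set.subset_union_left, hS.cycleConnected.union_isEar hp, M ⊔ N,
    isMatching_sup hM hN (Set.disjoint_right.2 fun z hzN hzM => ?_), Set.ext fun z => ?_⟩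
  · rw [hMS] at hzM
    exact hout hzN hzM.1
  · by_cases hzS : z ∈ S
    · have : z ∉ N.verts := fun h => hout h hzS
      simp [this, hMS, hzS]
    · have hzC : z ∉ C := fun h => hzS (hS.subset h)
      have hzx : z ≠ x := fun h => hzS (h ▸ hp.start_mem)
      have hzy : z ≠ y := fun h => hzS (h ▸ hp.end_mem)
      simp [hMS, hNp, hzS, hzC, hzx, hzy]

theorem oneCycleResonant_of_isEmpty_theta [Finite V] (h2 : G.TwoConnected) (c : G.Coloring Bool)
    (h : ∀ u v, c u = c v → IsEmpty (Theta G u v)) : G.OneCycleResonant := by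
  intro v C hC
  have hbase : IsMatchedExtension G {z | z ∈ C.support} {z | z ∈ C.support} :=
    ⟨subset_rfl, fun x hx y hy _ => ⟨v, C, hC, fun _ => id, hx, hy⟩,
      ⊥, fun v hv => absurd hv (by simp), by simp⟩
  obtain ⟨S, -, hS, hmax⟩ := Finite.exists_le_maximal hbase
  obtain rfl | hne := eq_or_ne S Set.univ
  · obtain ⟨M, hM, hMC⟩ := hS.exists_isMatching
    exact ⟨M, hM, hMC.trans (by ext; simp)⟩
  have hnontrivial : S.Nontrivial :=
    ⟨v, hS.subset C.start_mem_support, C.snd, hS.subset (C.getVert_mem_support 1),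
      (C.adj_snd hC.not_nil).ne⟩
  obtain ⟨x, y, p, hp⟩ := exists_isEar h2 hnontrivial hne
  have hcolor : c x ≠ c y := fun heq =>
    not_isEmpty_iff.2 (hS.cycleConnected.nonempty_theta hp) (h x y heq)
  obtain ⟨z, hzp, hzS⟩ := hp.exists_notMem
  have hle := hmax (hS.union_isEar hp ((odd_length_iff_color_ne c p).2 hcolor))
    Set.subset_union_left
  exact absurd (hle (Or.inr hzp)) hzS

end Ears

section Attachments

/-- `z` is attached to `B` outside `H`: a walk from `z` that avoids `H` ends at a neighbour of a
vertex of `B`. -/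
def AttachesTo (G : SimpleGraph V) (H B : Set V) (z : V) : Prop :=
  ∃ (x : V) (w : G.Walk z x), (∀ t ∈ w.support, t ∉ H) ∧ ∃ y ∈ B, G.Adj x y

variable {H : Set V}

lemma AttachesTo.of_adj {B : Set V} {z z' : V} (h : AttachesTo G H B z') (hz : z ∉ H)
    (hadj : G.Adj z z') : AttachesTo G H B z := by
  obtain ⟨x, w, hw, hx⟩ := h
  exact ⟨x, .cons hadj w, by simpa [hz] using hw, hx⟩

lemma exists_isMatching_compl_of_not_attachesTo {ι : Type*} [Nonempty ι] {B : ι → Set V}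
    {M : ι → G.Subgraph} (hM : ∀ k, (M k).IsMatching) (hcover : ∀ k, Hᶜ ⊆ (M k).verts)
    (hinter : ∀ k, (M k).verts ∩ H ⊆ B k) (hmiss : ∀ z ∉ H, ∃ k, ¬AttachesTo G H (B k) z) :
    ∃ N : G.Subgraph, N.IsMatching ∧ N.verts = Hᶜ := by
  -- `K` is constant on the components of `G - H`, so the matchings `M (K z)` fit together.
  let K (z : V) : ι := Classical.epsilon fun k => ¬AttachesTo G H (B k) z
  have hK_not {z : V} (hz : z ∉ H) : ¬AttachesTo G H (B (K z)) z :=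
    Classical.epsilon_spec (hmiss z hz)
  have hK_adj {z w : V} (hz : z ∉ H) (hw : w ∉ H) (hadj : G.Adj z w) : K z = K w := by
    have hiff (k : ι) : AttachesTo G H (B k) z ↔ AttachesTo G H (B k) w :=
      ⟨fun h => h.of_adj hw hadj.symm, fun h => h.of_adj hz hadj⟩
    simp only [K, hiff]
  let N : G.Subgraph :=
    { verts := Hᶜ
      Adj := fun z w => z ∉ H ∧ w ∉ H ∧ (M (K z)).Adj z w
      adj_sub := fun h => h.2.2.adj_sub
      edge_vert := fun h => h.1
      symm := ⟨fun z w ⟨hz, hw, h⟩ => ⟨hw, hz, hK_adj hz hw h.adj_sub ▸ h.symm⟩⟩ }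
  refine ⟨N, fun z (hz : z ∉ H) => ?_, rfl⟩
  obtain ⟨w, hzw, huniq⟩ := hM (K z) (hcover _ hz)
  have hw : w ∉ H := fun hwH =>
    hK_not hz ⟨z, .nil, by simpa using hz, w, hinter _ ⟨hzw.snd_mem, hwH⟩, hzw.adj_sub⟩
  exact ⟨w, ⟨hz, hw, hzw⟩, fun w' hw' => huniq w' hw'.2.2⟩

lemma exists_fan_of_attachesTo {B : Fin 3 → Set V} {z : V} (hBH : ∀ k, B k ⊆ H)
    (hB : Pairwise fun k l => Disjoint (B k) (B l)) (h : ∀ k, AttachesTo G H (B k) z) :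
    ∃ (y : Fin 3 → V) (e : V) (F : Fan G e y), (∀ k, y k ∈ B k) ∧ F.verts ∩ H ⊆ Set.range y := by
  choose x w hw y hy hadj using h
  obtain ⟨e, T, hT, hTw, hTe⟩ := exists_tripod w
  have hTH (k) (t) (ht : t ∈ (T k).support) : t ∉ H :=
    (hTw k t ht).elim fun j hj => hw j t hj
  have hyT (k l) : y k ∉ (T l).support := fun ht => hTH l _ ht (hBH k (hy k))
  refine ⟨y, e, ⟨fun k => (T k).concat (hadj k), fun k => (hT k).concat (hyT k k) (hadj k),
    fun k hk => hyT k k (by rw [hk]; exact Walk.start_mem_support _),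
    fun k l hkl t hk hl => ?_⟩, hy, ?_⟩
  · rw [Walk.support_concat, List.mem_append, List.mem_singleton] at hk hl
    rcases hk with hk | rfl <;> rcases hl with hl | hl
    · exact hTe hkl t hk hl
    · exact absurd (hl ▸ hk) (hyT l k)
    · exact absurd hl (hyT k l)
    · exact absurd (hl ▸ hy l) (Set.disjoint_left.1 (hB hkl) (hy k))
  · rintro t ⟨⟨k, hk⟩, htH⟩
    rw [Walk.support_concat, List.mem_append, List.mem_singleton] at hk
    exact ⟨k, (hk.resolve_left fun ht => hTH k t ht htH).symm⟩

namespace Theta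

variable {u v : V}

lemma interior_subset_verts (θ : Theta G u v) (k : Fin 3) : θ.interior k ⊆ θ.verts :=
  fun _ ht => ⟨k, ht.1⟩

lemma notMem_support_of_mem_interior (θ : Theta G u v) {k l : Fin 3} (hkl : k ≠ l) {z : V}
    (hz : z ∈ θ.interior k) : z ∉ (θ.path l).support :=
  fun hl => (θ.disjoint hkl z hz.1 hl).elim hz.2.1 hz.2.2

lemma disjoint_interior (θ : Theta G u v) :
    Pairwise fun k l => Disjoint (θ.interior k) (θ.interior l) :=
  fun _ _ hkl => Set.disjoint_left.2 fun _ hk hl => θ.notMem_support_of_mem_interior hkl hk hl.1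

lemma containsSubdivision_of_attachesTo (θ : Theta G u v) {z : V}
    (h : ∀ k, AttachesTo G θ.verts (θ.interior k) z) :
    G.ContainsSubdivision (completeBipartiteGraph (Fin 3) (Fin 3)) := by
  obtain ⟨y, e, F, hy, hF⟩ :=
    exists_fan_of_attachesTo θ.interior_subset_verts θ.disjoint_interior h
  obtain ⟨A, B, hA, hB, hAB⟩ := θ.exists_fans hy
  have hFA : F.MeetAtEnds A := (Set.inter_subset_inter_right _ hA).trans hF
  have hFB : F.MeetAtEnds B := (Set.inter_subset_inter_right _ hB).trans hF
  exact Fan.hasSubdivision_completeBipartiteGraph (x := ![u, v, e])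
    (fun | 0 => A | 1 => B | 2 => F)
    (pairwise_fin_three (fun _ _ => .symm) hAB hFA.symm hFB.symm) fun _ _ => trivial

lemma length_ne_zero (θ : Theta G u v) (k : Fin 3) : (θ.path k).length ≠ 0 :=
  fun h => θ.ne (Walk.eq_of_length_eq_zero h)

lemma exists_isMatching_of_oneCycleResonant (θ : Theta G u v) (hres : G.OneCycleResonant)
    (heven : ∀ k, Even (θ.path k).length) (k : Fin 3) :
    ∃ M : G.Subgraph, M.IsMatching ∧ M.verts = θ.vertsᶜ ∪ θ.interior k := by
  obtain ⟨l, l', hkl, hkl', hll', hcases⟩ : ∃ l l', k ≠ l ∧ k ≠ l' ∧ l ≠ l' ∧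
      ∀ m, m = k ∨ m = l ∨ m = l' := by
    revert k; decide
  have hlen : 1 < (θ.path l).length := by
    have := θ.length_ne_zero l
    have := heven l
    grind
  obtain ⟨M, hM, hMv⟩ := hres u _
    ((θ.disjoint hll').isCycle_append_reverse (θ.isPath l) (θ.isPath l') hlen)
  refine ⟨M, hM, hMv.trans (Set.ext fun z => ?_)⟩
  simp only [Set.mem_ofPred_eq, Walk.mem_support_append_iff, Walk.support_reverse,
    List.mem_reverse, Set.mem_union]
  constructor
  · intro hz
    by_cases hzk : z ∈ (θ.path k).support
    · exact Or.inr ⟨hzk, fun h => hz (Or.inl (by simp [h])),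
        fun h => hz (Or.inl (by simp [h]))⟩
    · refine Or.inl fun ⟨m, hm⟩ => ?_
      rcases hcases m with rfl | rfl | rfl
      exacts [hzk hm, hz (Or.inl hm), hz (Or.inr hm)]
  · rintro (hz | hz) (h | h)
    exacts [hz ⟨l, h⟩, hz ⟨l', h⟩, θ.notMem_support_of_mem_interior hkl hz h,
      θ.notMem_support_of_mem_interior hkl' hz h]

lemma odd_ncard_interior (θ : Theta G u v) {k : Fin 3} (heven : Even (θ.path k).length) :
    Odd (θ.interior k).ncard := by
  classical
  have hinterior : θ.interior k = ((θ.path k).support.toFinset \ {u, v} : Finset V) := by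
    ext z
    simp [interior]
  rw [hinterior, Set.ncard_coe_finset,
    Finset.card_sdiff_of_subset (by simp [Finset.insert_subset_iff]), Finset.card_pair θ.ne,
    List.toFinset_card_of_nodup (θ.isPath k).support_nodup,
    Walk.length_support]
  have := θ.length_ne_zero k
  grind

theorem containsSubdivision_of_oneCycleResonant [Finite V] (θ : Theta G u v)
    (hres : G.OneCycleResonant) (heven : ∀ k, Even (θ.path k).length) :
    G.ContainsSubdivision (completeBipartiteGraph (Fin 3) (Fin 3)) := by
  by_contra hK
  choose M hM hMv using θ.exists_isMatching_of_oneCycleResonant hres heven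
  obtain ⟨N, hN, hNv⟩ : ∃ N : G.Subgraph, N.IsMatching ∧ N.verts = θ.vertsᶜ := by
    refine exists_isMatching_compl_of_not_attachesTo (B := θ.interior) hM
      (fun k => hMv k ▸ Set.subset_union_left) (fun k => ?_) fun z _ => ?_
    · rw [hMv]
      rintro t ⟨ht | ht, htθ⟩
      exacts [absurd htθ ht, ht]
    · by_contra! hz
      exact hK (θ.containsSubdivision_of_attachesTo hz)
  have hdisj : Disjoint θ.vertsᶜ (θ.interior 0) :=
    Set.disjoint_compl_left_iff_subset.2 (θ.interior_subset_verts 0)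
  have hcard := congrArg Set.ncard (hMv 0)
  rw [Set.ncard_union_eq hdisj, ← hNv] at hcard
  have hMeven := even_ncard_verts_of_isMatching (hM 0)
  have hNeven := even_ncard_verts_of_isMatching hN
  have hodd := θ.odd_ncard_interior (heven 0)
  grind

end Theta

end Attachments

end ThetaResonance

theorem stmt_14 {V : Type*} [Fintype V] (G : SimpleGraph V)
    (h2 : G.TwoConnected) (hbip : G.Colorable 2) :
    ¬ G.ContainsEvenSubdivision (completeBipartiteGraph (Fin 2) (Fin 3))
      ↔ G.KuratowskiPlanar ∧ G.OneCycleResonant := by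
  obtain ⟨c₀⟩ := hbip
  let c : G.Coloring Bool := SimpleGraph.recolorOfEquiv G finTwoEquiv c₀
  rw [ThetaResonance.containsEvenSubdivision_iff_exists_theta c]
  constructor
  · intro h
    have hempty (u v : V) (huv : c u = c v) : IsEmpty (ThetaResonance.Theta G u v) :=
      not_nonempty_iff.1 fun hθ => h ⟨u, v, huv, hθ⟩
    exact ⟨ThetaResonance.kuratowskiPlanar_of_isEmpty_theta c hempty,
      ThetaResonance.oneCycleResonant_of_isEmpty_theta h2 c hempty⟩
  · rintro ⟨hplanar, hres⟩ ⟨u, v, huv, ⟨θ⟩⟩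
    exact hplanar.2 (θ.containsSubdivision_of_oneCycleResonant hres fun k =>
      Nat.not_odd_iff_even.1 fun hodd => (ThetaResonance.odd_length_iff_color_ne c _).1 hodd huv)
end

section
/- If G is a 2-connected bipartite graph containing no even subdivision of K_{2,3}, then G is elementary: every edge of G lies in some perfect matching of G. -/
/-!
Start from the given edge and grow a matched vertex set `S` that induces a subgraph without cut
vertices, by adding ears: paths that meet `S` exactly in their two distinct ends. If the ends of an
ear had the same colour, then the ear and two internally disjoint paths in `S` between its ends
(Whitney) would have even length, and three such paths form an even subdivision of `K_{2,3}`. So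
the ends have different colours, the ear has odd length, and its interior can be matched along the
ear. As the whole graph has no cut vertex, an ear exists until every vertex is matched; directed
unions preserve both properties of `S`, so by Zorn's lemma the growth reaches this stage even in an
infinite graph.
-/

open SimpleGraph

section Walks

variable {V : Type*} {G : SimpleGraph V} {u v w : V}

theorem preconnected_induce_iff_forall_exists_walk {S : Set V} :
    (G.induce S).Preconnected ↔
      ∀ u ∈ S, ∀ v ∈ S, ∃ p : G.Walk u v, ∀ z ∈ p.support, z ∈ S := by
  refine ⟨fun h u hu v hv ↦ ?_, fun h u v ↦ ?_⟩
  · obtain ⟨p⟩ := h ⟨u, hu⟩ ⟨v, hv⟩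
    refine ⟨p.map (Embedding.induce S).toHom, fun z hz ↦ ?_⟩
    obtain ⟨y, -, rfl⟩ := List.mem_map.1 (Walk.support_map (Embedding.induce S).toHom p ▸ hz)
    exact y.2
  · obtain ⟨p, hp⟩ := h u u.2 v v.2
    exact ⟨p.induce S hp⟩

theorem isPath_append {p : G.Walk u v} {q : G.Walk v w} (hp : p.IsPath) (hq : q.IsPath)
    (hpq : ∀ z ∈ p.support, z ∈ q.support → z = v) : (p.append q).IsPath := by
  have hv : v ∉ q.support.tail := by
    have hnodup := hq.support_nodup
    rw [← Walk.cons_tail_support] at hnodup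
    exact (List.nodup_cons.1 hnodup).1
  rw [Walk.isPath_def, Walk.support_append, List.nodup_append']
  refine ⟨hp.support_nodup, hq.support_nodup.tail, fun z hzp hzq ↦ hv ?_⟩
  exact hpq z hzp (List.mem_of_mem_tail hzq) ▸ hzq

theorem exists_isPath_to_first_mem {T : Set V} (p : G.Walk u v) (hv : v ∈ T) :
    ∃ x ∈ T, ∃ q : G.Walk u x, q.IsPath ∧ (∀ z ∈ q.support, z ∈ p.support) ∧
      ∀ z ∈ q.support, z ∈ T → z = x := by
  classical
  induction p with
  | nil => exact ⟨_, hv, Walk.nil, by simp⟩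
  | @cons u _ _ hadj p ih =>
    by_cases hu : u ∈ T
    · exact ⟨u, hu, Walk.nil, by simp⟩
    · obtain ⟨x, hx, q, -, hqp, hqT⟩ := ih hv
      have hsupp : ∀ z ∈ (Walk.cons hadj q).bypass.support, z = u ∨ z ∈ q.support := fun z hz ↦ by
        simpa using Walk.support_bypass_subset_support _ hz
      refine ⟨x, hx, (Walk.cons hadj q).bypass, Walk.bypass_isPath _, ?_, ?_⟩ <;> grind

theorem exists_walk_from_end_avoiding {p : G.Walk u v} (hp : p.IsPath) {z : V}
    (hz : z ∈ p.support) (hzw : z ≠ w) :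
    ∃ x, (x = u ∨ x = v) ∧ ∃ q : G.Walk x z, ∀ y ∈ q.support, y ∈ p.support ∧ y ≠ w := by
  classical
  by_cases hw : w ∈ (p.takeUntil z hz).support
  · have hw' : w ∉ (p.dropUntil z hz).support := fun hw' ↦ by
      rw [← p.take_spec hz] at hp
      exact hp.ne_of_mem_support_of_append hzw.symm hw hw' rfl
    refine ⟨v, Or.inr rfl, (p.dropUntil z hz).reverse, fun y hy ↦ ?_⟩
    rw [Walk.support_reverse, List.mem_reverse] at hy
    exact ⟨p.support_dropUntil_subset_support hz hy, fun h ↦ hw' (h ▸ hy)⟩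
  · exact ⟨u, Or.inl rfl, p.takeUntil z hz, fun y hy ↦
      ⟨p.support_takeUntil_subset_support hz hy, fun h ↦ hw (h ▸ hy)⟩⟩

end Walks

section Subdivisions

variable {V : Type*} {G : SimpleGraph V} {u v : V}

theorem hasSubdivision_completeBipartiteGraph {A B : Type*} {plen : ℕ → Prop} (f : A ⊕ B → V)
    (hf : f.Injective) (p : ∀ a b, G.Walk (f (Sum.inl a)) (f (Sum.inr b)))
    (hpath : ∀ a b, (p a b).IsPath) (hlen : ∀ a b, plen (p a b).length)
    (hbranch : ∀ a b x, f x ∈ (p a b).support → x = Sum.inl a ∨ x = Sum.inr b)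
    (hinter : ∀ a b a' b', (a, b) ≠ (a', b') →
      ∀ z ∈ (p a b).support, z ∈ (p a' b').support → ∃ x, z = f x) :
    G.HasSubdivision (completeBipartiteGraph A B) plen := by
  let walk : ∀ x y, (completeBipartiteGraph A B).Adj x y → G.Walk (f x) (f y)
    | Sum.inl a, Sum.inr b, _ => p a b
    | Sum.inr b, Sum.inl a, _ => (p a b).reverse
    | Sum.inl _, Sum.inl _, h => absurd h (by simp)
    | Sum.inr _, Sum.inr _, h => absurd h (by simp)
  have walk_eq : ∀ x y h, ∃ a b, s(x, y) = s(Sum.inl a, Sum.inr b) ∧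
      ((walk x y h).IsPath ↔ (p a b).IsPath) ∧ (walk x y h).length = (p a b).length ∧
      ∀ z, z ∈ (walk x y h).support ↔ z ∈ (p a b).support := by
    rintro (a | b) (a' | b') h
    · simp at h
    · exact ⟨a, b', rfl, Iff.rfl, rfl, fun _ ↦ Iff.rfl⟩
    · exact ⟨a', b, Sym2.eq_swap, Walk.isPath_reverse_iff _, Walk.length_reverse _, fun z ↦ by
        simp [walk]⟩
    · simp at h
  have walk_branch : ∀ x y h z, f z ∈ (walk x y h).support → z = x ∨ z = y := by
    intro x y h z hz
    obtain ⟨a, b, hxy, -, -, hsupp⟩ := walk_eq x y h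
    rw [← Sym2.mem_iff, hxy, Sym2.mem_iff]
    exact hbranch a b z ((hsupp _).1 hz)
  refine ⟨f, hf, walk, fun x y h ↦ ?_, fun x y h ↦ ?_, walk_branch, ?_⟩
  · obtain ⟨a, b, -, hiff, -⟩ := walk_eq x y h
    exact hiff.2 (hpath a b)
  · obtain ⟨a, b, -, -, hlength, -⟩ := walk_eq x y h
    exact hlength ▸ hlen a b
  · intro x y x' y' h h' hne z hz hz'
    obtain ⟨a, b, hxy, -, -, hsupp⟩ := walk_eq x y h
    obtain ⟨a', b', hxy', -, -, hsupp'⟩ := walk_eq x' y' h'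
    obtain ⟨t, rfl⟩ := hinter a b a' b' (by grind) z ((hsupp z).1 hz) ((hsupp' z).1 hz')
    exact ⟨(walk_branch x y h t hz).imp (congrArg f) (congrArg f),
      (walk_branch x' y' h' t hz').imp (congrArg f) (congrArg f)⟩

/-- Two walks with the same ends are internally disjoint if they share no vertex other than these
ends. A walk of length at most one is internally disjoint from itself. -/
def InternallyDisjoint (p q : G.Walk u v) : Prop :=
  ∀ z ∈ p.support, z ∈ q.support → z = u ∨ z = v

theorem InternallyDisjoint.symm {p q : G.Walk u v} (h : InternallyDisjoint p q) :
    InternallyDisjoint q p :=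
  fun z hq hp ↦ h z hp hq

theorem exists_eq_cons_odd_of_even {p : G.Walk u v} (hp : p.IsPath) (heven : Even p.length)
    (huv : u ≠ v) : ∃ m, ∃ (h : G.Adj u m) (q : G.Walk m v), p = Walk.cons h q ∧ q.IsPath ∧
      Odd q.length ∧ u ∉ q.support ∧ m ≠ v := by
  cases p with
  | nil => exact absurd rfl huv
  | @cons _ m _ h q =>
    rw [Walk.cons_isPath_iff] at hp
    rw [Walk.length_cons, Nat.even_add_one, Nat.not_even_iff_odd] at heven
    refine ⟨m, h, q, rfl, hp.1, heven, hp.2, fun hmv ↦ ?_⟩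
    have hlen := Walk.length_eq_zero_iff.2 (hp.1.nil_iff_eq.2 hmv)
    simp [hlen] at heven

/- The branch vertices are the two ends and, on each path, the neighbour of the first end: it splits
a path of even length into an edge and a path of odd length. -/
theorem containsEvenSubdivision_of_even_paths {ι : Type*} (huv : u ≠ v) (p : ι → G.Walk u v)
    (hpath : ∀ i, (p i).IsPath) (heven : ∀ i, Even (p i).length)
    (hdisj : Pairwise fun i j ↦ InternallyDisjoint (p i) (p j)) :
    G.ContainsEvenSubdivision (completeBipartiteGraph (Fin 2) ι) := by
  choose m hadj q hp hq hodd hu hmv using fun i ↦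
    exists_eq_cons_odd_of_even (hpath i) (heven i) huv
  have hsupp : ∀ i, (p i).support = u :: (q i).support := fun i ↦ by simp [hp i]
  have hdisj' : ∀ i j, i ≠ j → ∀ z ∈ (p i).support, z ∈ (p j).support → z = u ∨ z = v :=
    fun i j hij ↦ hdisj hij
  have hm_mem : ∀ i, m i ∈ (q i).support := fun i ↦ (q i).start_mem_support
  have hm_eq : ∀ i j, m i ∈ (p j).support → i = j := fun i j hij ↦ by
    by_contra hne
    exact (hdisj' i j hne _ (by simp [hsupp]) hij).elim (hadj i).ne' (hmv i)
  let walk : ∀ (a : Fin 2) (i : ι), G.Walk (![u, v] a) (m i)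
    | 0, i => (hadj i).toWalk
    | 1, i => (q i).reverse
  have mem_walk_zero : ∀ i z, z ∈ (walk 0 i).support ↔ z = u ∨ z = m i := by simp [walk]
  have mem_walk_one : ∀ i z, z ∈ (walk 1 i).support ↔ z ∈ (q i).support := by simp [walk]
  refine hasSubdivision_completeBipartiteGraph (Sum.elim ![u, v] m) ?_ walk ?_ ?_ ?_ ?_
  · refine Function.Injective.sumElim ?_ (fun i j hij ↦ hm_eq i j (by simp [hsupp, hij])) ?_
    · simpa [Function.Injective, Fin.forall_fin_two] using ⟨huv, huv.symm⟩
    · simpa [Fin.forall_fin_two] using ⟨fun i ↦ (hadj i).ne, fun i ↦ (hmv i).symm⟩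
  · simpa [Fin.forall_fin_two, walk] using ⟨fun i ↦ (hadj i).ne, hq⟩
  · simpa [Fin.forall_fin_two, walk] using hodd
  · simp only [Fin.forall_fin_two, Sum.forall, Sum.elim_inl, Sum.elim_inr, mem_walk_zero,
      mem_walk_one]
    simp only [Matrix.cons_val_zero, Matrix.cons_val_one]
    grind
  · simp only [Fin.forall_fin_two, Sum.exists, Fin.exists_fin_two, Sum.elim_inl, Sum.elim_inr,
      mem_walk_zero, mem_walk_one]
    simp only [Matrix.cons_val_zero, Matrix.cons_val_one]
    grind

end Subdivisions

section Nonseparable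

variable {V : Type*} {G : SimpleGraph V} {S : Set V} {u v w x : V}

/-- `S` induces a subgraph without cut vertices: it stays connected when any one vertex is removed.
The removed vertex need not lie in `S`, so that `S` itself is connected unless it contains every
vertex. -/
def NonseparableOn (G : SimpleGraph V) (S : Set V) : Prop :=
  ∀ w, (G.induce (S \ {w})).Preconnected

theorem nonseparableOn_pair (h : G.Adj u v) : NonseparableOn G {u, v} := by
  intro w
  rw [preconnected_induce_iff_forall_exists_walk]
  rintro a ⟨ha, haw⟩ b ⟨hb, hbw⟩
  obtain rfl | hab := eq_or_ne a b
  · exact ⟨Walk.nil, by grind [Walk.support_nil]⟩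
  · have hadj : G.Adj a b := by grind [G.adj_comm]
    exact ⟨hadj.toWalk, by grind [Walk.support_cons, Walk.support_nil]⟩

theorem nonseparableOn_iUnion_of_directed {ι : Type*} {S : ι → Set V} (hdir : Directed (· ⊆ ·) S)
    (hS : ∀ i, NonseparableOn G (S i)) : NonseparableOn G (⋃ i, S i) := by
  intro w
  rw [preconnected_induce_iff_forall_exists_walk]
  rintro a ⟨ha, haw⟩ b ⟨hb, hbw⟩
  obtain ⟨i, hi⟩ := Set.mem_iUnion.1 ha
  obtain ⟨j, hj⟩ := Set.mem_iUnion.1 hb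
  obtain ⟨k, hik, hjk⟩ := hdir i j
  obtain ⟨p, hp⟩ := preconnected_induce_iff_forall_exists_walk.1 (hS k w)
    a ⟨hik hi, haw⟩ b ⟨hjk hj, hbw⟩
  exact ⟨p, fun z hz ↦ ⟨Set.mem_iUnion_of_mem k (hp z hz).1, (hp z hz).2⟩⟩

theorem exists_internallyDisjoint_paths_of_adj {P Q : G.Walk u w} (hP : P.IsPath) (hQ : Q.IsPath)
    (hPQ : InternallyDisjoint P Q) (hadj : G.Adj w v) (huv : u ≠ v) {r : G.Walk v x}
    (hr : r.IsPath) (hxP : x ∈ P.support) (hxw : x ≠ w)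
    (hrPQ : ∀ z ∈ r.support, z ∈ P.support ∨ z ∈ Q.support → z = x) :
    ∃ P' Q' : G.Walk u v, P'.IsPath ∧ Q'.IsPath ∧ InternallyDisjoint P' Q' ∧
      ∀ z, z ∈ P'.support ∨ z ∈ Q'.support → z ∈ P.support ∨ z ∈ Q.support ∨ z ∈ r.support := by
  classical
  have hP'r : ∀ z ∈ (P.takeUntil x hxP).support, z ∈ r.reverse.support → z = x := fun z hzP hzr ↦
    hrPQ z (by simpa using hzr) (.inl (P.support_takeUntil_subset_support hxP hzP))
  have hxQ : x ∈ Q.support → x = u := fun hxQ ↦ (hPQ x hxP hxQ).resolve_right hxw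
  have hvQ : v ∉ Q.support := fun hvQ ↦ by
    have hvx : v = x := hrPQ v r.start_mem_support (.inr hvQ)
    exact huv (hvx.trans (hxQ (hvx ▸ hvQ))).symm
  have hw : w ∉ (P.takeUntil x hxP).support :=
    Walk.endpoint_notMem_support_takeUntil hP hxP hxw.symm
  refine ⟨(P.takeUntil x hxP).append r.reverse, Q.concat hadj,
    isPath_append (hP.takeUntil hxP) hr.reverse hP'r, hQ.concat hvQ hadj, fun z hzP hzQ ↦ ?_,
    fun z hz ↦ ?_⟩
  · have := @hPQ z
    have := @hrPQ z
    have := P.support_takeUntil_subset_support hxP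
    grind [Walk.mem_support_append_iff, Walk.support_reverse, Walk.support_concat]
  · have := P.support_takeUntil_subset_support hxP
    have := r.start_mem_support
    grind [Walk.mem_support_append_iff, Walk.support_reverse, Walk.support_concat]

theorem NonseparableOn.exists_internallyDisjoint_paths (hS : NonseparableOn G S)
    (hconn : (G.induce S).Preconnected) (hu : u ∈ S) (hv : v ∈ S) (huv : u ≠ v) :
    ∃ P Q : G.Walk u v, P.IsPath ∧ Q.IsPath ∧ InternallyDisjoint P Q ∧
      ∀ z, z ∈ P.support ∨ z ∈ Q.support → z ∈ S := by
  rw [preconnected_induce_iff_forall_exists_walk] at hconn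
  obtain ⟨p, hp⟩ := hconn v hv u hu
  induction p with
  | nil => exact absurd rfl huv
  | @cons v w u hadj p ih =>
    have hwS : w ∈ S := hp w (by simp)
    obtain rfl | hwu := eq_or_ne w u
    · have hpath : hadj.symm.toWalk.IsPath := by simpa using huv
      have hsupp : ∀ z ∈ hadj.symm.toWalk.support, z = w ∨ z = v := by simp
      exact ⟨_, _, hpath, hpath, fun z hz _ ↦ hsupp z hz, by grind⟩
    obtain ⟨P, Q, hP, hQ, hPQ, hPQS⟩ := ih hu hwS hwu.symm fun z hz ↦ hp z (by simp [hz])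
    obtain ⟨r₀, hr₀⟩ := preconnected_induce_iff_forall_exists_walk.1 (hS w)
      v ⟨hv, hadj.ne⟩ u ⟨hu, hwu.symm⟩
    obtain ⟨x, hx, r, hr, hrr₀, hrPQ⟩ := exists_isPath_to_first_mem
      (T := {z | z ∈ P.support ∨ z ∈ Q.support}) r₀ (.inl P.start_mem_support)
    have hxw : x ≠ w := (hr₀ x (hrr₀ x r.end_mem_support)).2
    have hsub : ∀ z ∈ r.support, z ∈ S := fun z hz ↦ (hr₀ z (hrr₀ z hz)).1
    rcases hx with hxP | hxQ
    · obtain ⟨P', Q', hP', hQ', hPQ', hsupp⟩ :=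
        exists_internallyDisjoint_paths_of_adj hP hQ hPQ hadj.symm huv hr hxP hxw hrPQ
      exact ⟨P', Q', hP', hQ', hPQ', by grind⟩
    · obtain ⟨P', Q', hP', hQ', hPQ', hsupp⟩ :=
        exists_internallyDisjoint_paths_of_adj hQ hP hPQ.symm hadj.symm huv hr hxQ hxw
          fun z hz hzQP ↦ hrPQ z hz hzQP.symm
      exact ⟨P', Q', hP', hQ', hPQ', by grind⟩

end Nonseparable

section Ears

variable {V : Type*} {G : SimpleGraph V} {S : Set V} {u v : V}

/-- An ear of `S`: a path that meets `S` exactly in its two distinct ends and has at least one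
interior vertex. -/
structure IsEar (S : Set V) (p : G.Walk u v) : Prop where
  isPath : p.IsPath
  left_mem : u ∈ S
  right_mem : v ∈ S
  ne : u ≠ v
  eq_or_eq_of_mem : ∀ z ∈ p.support, z ∈ S → z = u ∨ z = v
  exists_notMem : ∃ z ∈ p.support, z ∉ S

theorem NonseparableOn.union_ear (hS : NonseparableOn G S) {p : G.Walk u v} (hp : IsEar S p) :
    NonseparableOn G (S ∪ {z | z ∈ p.support}) := by
  intro w
  rw [preconnected_induce_iff_forall_exists_walk]
  have walk_from_S : ∀ a ∈ (S ∪ {z | z ∈ p.support}) \ {w}, ∃ x ∈ S \ {w}, ∃ q : G.Walk x a,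
      ∀ z ∈ q.support, z ∈ (S ∪ {z | z ∈ p.support}) \ {w} := by
    rintro a ⟨haS | hap, haw⟩
    · exact ⟨a, ⟨haS, haw⟩, Walk.nil, by simpa using ⟨.inl haS, haw⟩⟩
    · obtain ⟨x, hx, q, hq⟩ := exists_walk_from_end_avoiding hp.isPath hap haw
      have hxS : x ∈ S := hx.elim (· ▸ hp.left_mem) (· ▸ hp.right_mem)
      exact ⟨x, ⟨hxS, (hq x q.start_mem_support).2⟩, q, fun z hz ↦ ⟨.inr (hq z hz).1, (hq z hz).2⟩⟩
  intro a ha b hb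
  obtain ⟨x, hx, q, hq⟩ := walk_from_S a ha
  obtain ⟨y, hy, r, hr⟩ := walk_from_S b hb
  obtain ⟨s, hs⟩ := preconnected_induce_iff_forall_exists_walk.1 (hS w) x hx y hy
  refine ⟨q.reverse.append (s.append r), fun z hz ↦ ?_⟩
  simp only [Walk.mem_support_append_iff, Walk.support_reverse, List.mem_reverse] at hz
  rcases hz with hz | hz | hz
  · exact hq z hz
  · exact ⟨.inl (hs z hz).1, (hs z hz).2⟩
  · exact hr z hz

theorem exists_isEar (hG : NonseparableOn G Set.univ) (hS : S.Nontrivial) (hne : S ≠ Set.univ) :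
    ∃ u v, ∃ p : G.Walk u v, IsEar S p := by
  have hwalk : ∀ w a b, a ≠ w → b ≠ w → ∃ p : G.Walk a b, w ∉ p.support := fun w a b ha hb ↦ by
    obtain ⟨p, hp⟩ := preconnected_induce_iff_forall_exists_walk.1 (hG w) a ⟨trivial, ha⟩
      b ⟨trivial, hb⟩
    exact ⟨p, fun hw ↦ (hp w hw).2 rfl⟩
  obtain ⟨t, ht⟩ := (Set.ne_univ_iff_exists_notMem S).1 hne
  obtain ⟨s, hs, s', hs', hss'⟩ := hS
  obtain ⟨p, -⟩ := hwalk s' s t hss' (ne_of_mem_of_not_mem hs' ht).symm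
  obtain ⟨⟨⟨u, a⟩, hua⟩, -, hu, ha⟩ := p.exists_boundary_dart S hs ht
  obtain ⟨x, hx, hxu⟩ := Set.Nontrivial.exists_ne ⟨s, hs, s', hs', hss'⟩ u
  obtain ⟨q, hq⟩ := hwalk u a x hua.ne' hxu
  obtain ⟨v, hv, r, hr, hrq, hrS⟩ := exists_isPath_to_first_mem q hx
  have hur : u ∉ r.support := fun h ↦ hq (hrq u h)
  refine ⟨u, v, Walk.cons hua r, hr.cons hur, hu, hv, ?_, fun z hz hzS ↦ ?_, a, by simp, ha⟩
  · exact fun huv ↦ hur (huv ▸ r.end_mem_support)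
  · exact (List.mem_cons.1 hz).imp id fun hz ↦ hrS z hz hzS

theorem containsEvenSubdivision_of_isEar_of_color_eq (c : G.Coloring Bool)
    (hS : NonseparableOn G S) {p : G.Walk u v} (hp : IsEar S p) (hc : c u = c v) :
    G.ContainsEvenSubdivision (completeBipartiteGraph (Fin 2) (Fin 3)) := by
  obtain ⟨z, -, hz⟩ := hp.exists_notMem
  have hconn : (G.induce S).Preconnected := Set.sdiff_singleton_eq_self hz ▸ hS z
  obtain ⟨P, Q, hP, hQ, hPQ, hsub⟩ :=
    hS.exists_internallyDisjoint_paths hconn hp.left_mem hp.right_mem hp.ne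
  have heven : ∀ r : G.Walk u v, Even r.length := fun r ↦
    (c.even_length_iff_congr r).2 (by rw [hc])
  have hpP : InternallyDisjoint p P := fun z hzp hz ↦ hp.eq_or_eq_of_mem z hzp (hsub z (.inl hz))
  have hpQ : InternallyDisjoint p Q := fun z hzp hz ↦ hp.eq_or_eq_of_mem z hzp (hsub z (.inr hz))
  refine containsEvenSubdivision_of_even_paths hp.ne ![P, Q, p] ?_ (fun i ↦ heven _) ?_
  · simp [Fin.forall_fin_succ, hP, hQ, hp.isPath]
  · simp [Pairwise, Fin.forall_fin_succ, hPQ, hPQ.symm, hpP, hpP.symm, hpQ, hpQ.symm]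

end Ears

section Matchings

variable {V : Type*} {G : SimpleGraph V}

theorem exists_isMatching_verts_eq_interior {u v : V} {p : G.Walk u v} (hp : p.IsPath)
    (hodd : Odd p.length) :
    ∃ N : G.Subgraph, N.IsMatching ∧ N.verts = {z | z ∈ p.support ∧ z ≠ u ∧ z ≠ v} := by
  match p with
  | .nil => simp at hodd
  | .cons _ .nil => exact ⟨⊥, fun _ h ↦ h.elim, by
      ext z
      simp only [Subgraph.verts_bot, Walk.support_cons, Walk.support_nil, List.mem_cons,
        List.not_mem_nil, Set.mem_empty_iff_false, Set.mem_ofPred_eq]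
      tauto⟩
  | @Walk.cons _ _ _ a _ _ (@Walk.cons _ _ _ b _ hab p) =>
    have hodd' : Odd p.length := by
      simp only [Walk.length_cons] at hodd
      grind
    simp only [Walk.cons_isPath_iff, Walk.support_cons, List.mem_cons, not_or] at hp
    obtain ⟨⟨hp, hap⟩, hua, hup⟩ := hp
    obtain ⟨N, hN, hverts⟩ := exists_isMatching_verts_eq_interior hp hodd'
    have hbv : b ≠ v := fun hbv ↦ by
      have hlen := Walk.length_eq_zero_iff.2 (hp.nil_iff_eq.2 hbv)
      simp [hlen] at hodd'
    refine ⟨G.subgraphOfAdj hab ⊔ N, (Subgraph.IsMatching.subgraphOfAdj hab).sup hN ?_, ?_⟩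
    · rw [(Subgraph.IsMatching.subgraphOfAdj hab).support_eq_verts, hN.support_eq_verts, hverts,
        Set.disjoint_left]
      grind [subgraphOfAdj_verts]
    · have := p.start_mem_support
      have := p.end_mem_support
      ext z
      simp only [Subgraph.verts_sup, hverts, subgraphOfAdj_verts, Walk.support_cons, List.mem_cons,
        Set.mem_union, Set.mem_insert_iff, Set.mem_singleton_iff, Set.mem_ofPred_eq]
      grind

theorem isMatching_iSup_of_directed {ι : Type*} {M : ι → G.Subgraph} (hdir : Directed (· ≤ ·) M)
    (hM : ∀ i, (M i).IsMatching) : (⨆ i, M i).IsMatching := by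
  intro a ha
  obtain ⟨i, hi⟩ := Set.mem_iUnion.1 (Subgraph.verts_iSup ▸ ha)
  obtain ⟨b, hab, -⟩ := hM i hi
  refine ⟨b, Subgraph.iSup_adj.2 ⟨i, hab⟩, fun b' hab' ↦ ?_⟩
  obtain ⟨j, hj⟩ := Subgraph.iSup_adj.1 hab'
  obtain ⟨k, hik, hjk⟩ := hdir i j
  exact (hM k).eq_of_adj_left (hjk.2 hj) (hik.2 hab)

/-- A matching whose vertex set is nonseparable: the invariant of the ear construction. -/
structure IsNonseparableMatching (M : G.Subgraph) : Prop where
  isMatching : M.IsMatching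
  nonseparableOn : NonseparableOn G M.verts

theorem exists_maximal_isNonseparableMatching {M₀ : G.Subgraph} (h₀ : IsNonseparableMatching M₀) :
    ∃ M, M₀ ≤ M ∧ Maximal IsNonseparableMatching M := by
  refine zorn_le_nonempty₀ {M | IsNonseparableMatching M} (fun C hC hchain _ _ ↦ ?_) M₀ h₀
  have hdir : Directed (· ≤ ·) fun M : C ↦ (M : G.Subgraph) := hchain.directed
  refine ⟨⨆ M : C, (M : G.Subgraph), ⟨?_, ?_⟩, fun N hN ↦ le_iSup (fun M : C ↦ M.1) ⟨N, hN⟩⟩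
  · exact isMatching_iSup_of_directed hdir fun N ↦ (hC N.2).isMatching
  · rw [Subgraph.verts_iSup]
    exact nonseparableOn_iUnion_of_directed
      (hdir.mono_comp _ fun _ _ h ↦ Subgraph.verts_mono h) fun N ↦ (hC N.2).nonseparableOn

theorem IsNonseparableMatching.sup_of_verts_eq_interior {M N : G.Subgraph}
    (hM : IsNonseparableMatching M) {u v : V} {p : G.Walk u v} (hp : IsEar M.verts p)
    (hN : N.IsMatching) (hverts : N.verts = {z | z ∈ p.support ∧ z ≠ u ∧ z ≠ v}) :
    IsNonseparableMatching (M ⊔ N) := by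
  have hear := hp.eq_or_eq_of_mem
  refine ⟨hM.isMatching.sup hN ?_, ?_⟩
  · rw [hM.isMatching.support_eq_verts, hN.support_eq_verts, hverts, Set.disjoint_left]
    grind
  · have hunion : (M ⊔ N).verts = M.verts ∪ {z | z ∈ p.support} := by
      have := hp.left_mem
      have := hp.right_mem
      ext z
      rw [Subgraph.verts_sup, hverts]
      grind
    exact hunion ▸ hM.nonseparableOn.union_ear hp

theorem IsNonseparableMatching.verts_eq_univ_of_maximal (hG : NonseparableOn G Set.univ)
    (c : G.Coloring Bool)
    (hK : ¬ G.ContainsEvenSubdivision (completeBipartiteGraph (Fin 2) (Fin 3)))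
    {M : G.Subgraph} (hM : Maximal IsNonseparableMatching M) (hnontriv : M.verts.Nontrivial) :
    M.verts = Set.univ := by
  by_contra hne
  obtain ⟨u, v, p, hp⟩ := exists_isEar hG hnontriv hne
  have hc : c u ≠ c v := fun hc ↦
    hK (containsEvenSubdivision_of_isEar_of_color_eq c hM.prop.nonseparableOn hp hc)
  have hodd : Odd p.length := (c.odd_length_iff_not_congr p).2 (by grind)
  obtain ⟨N, hN, hverts⟩ := exists_isMatching_verts_eq_interior hp.isPath hodd
  have hMN : M ⊔ N ≤ M :=
    hM.le_of_ge (hM.prop.sup_of_verts_eq_interior hp hN hverts) le_sup_left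
  obtain ⟨z, hzp, hzM⟩ := hp.exists_notMem
  refine hzM (Subgraph.verts_mono (le_sup_right.trans hMN) (hverts ▸ ⟨hzp, ?_, ?_⟩))
  · exact (ne_of_mem_of_not_mem hp.left_mem hzM).symm
  · exact (ne_of_mem_of_not_mem hp.right_mem hzM).symm

end Matchings

theorem nonseparableOn_univ_iff {V : Type*} {G : SimpleGraph V} :
    NonseparableOn G Set.univ ↔ ∀ v, ((⊤ : G.Subgraph).deleteVerts {v}).coe.Preconnected := by
  refine forall_congr' fun v ↦ ?_
  rw [preconnected_induce_iff, Subgraph.preconnected_iff]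
  rfl

theorem stmt_16_general {V : Type*} (G : SimpleGraph V)
    (h2 : ∀ v : V, ((⊤ : G.Subgraph).deleteVerts {v}).coe.Preconnected) (hbip : G.Colorable 2)
    (h : ¬ G.ContainsEvenSubdivision (completeBipartiteGraph (Fin 2) (Fin 3))) :
    ∀ e ∈ G.edgeSet, ∃ M : G.Subgraph, M.IsPerfectMatching ∧ e ∈ M.edgeSet := by
  refine Sym2.ind fun x y hxy ↦ ?_
  rw [mem_edgeSet] at hxy
  have hstart : IsNonseparableMatching (G.subgraphOfAdj hxy) :=
    ⟨Subgraph.IsMatching.subgraphOfAdj hxy, nonseparableOn_pair hxy⟩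
  obtain ⟨M, hle, hM⟩ := exists_maximal_isNonseparableMatching hstart
  have hnontriv : M.verts.Nontrivial :=
    (Set.nontrivial_pair hxy.ne).mono (Subgraph.verts_mono hle)
  have hverts : M.verts = Set.univ :=
    IsNonseparableMatching.verts_eq_univ_of_maximal (nonseparableOn_univ_iff.2 h2)
      (hbip.toColoring (by simp)) h hM hnontriv
  exact ⟨M, ⟨hM.prop.isMatching, Subgraph.isSpanning_iff.2 hverts⟩,
    hle.2 (subgraphOfAdj_adj_self hxy)⟩

theorem stmt_16 {V : Type*} [Fintype V] (G : SimpleGraph V)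
    (h2 : G.TwoConnected) (hbip : G.Colorable 2)
    (h : ¬ G.ContainsEvenSubdivision (completeBipartiteGraph (Fin 2) (Fin 3))) :
    ∀ e ∈ G.edgeSet, ∃ M : G.Subgraph, M.IsPerfectMatching ∧ e ∈ M.edgeSet :=
  stmt_16_general G (fun v ↦ (h2.2 v).preconnected) hbip h
end
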